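/- (Theorem 25) Let 0 < θ₀ < θ₁ < 1, 0 < θ < 1, 0 < r, r₀, r₁, q₀, q₁ ≤ ∞, a, a₀, a₁, b₀, b₁ ∈ SV, ‖s^{-1/r₀} b₀(s)/a₀(s)‖_{r₀,(1,∞)} < ∞, and ‖s^{-1/r₁} b₁(s)/a₁(s)‖_{r₁,(1,∞)} < ∞. Put c₀(t) = a₀(t) ‖s^{-1/r₀} b₀(s)/a₀(s)‖_{r₀,(t,∞)}, c₁(t) = a₁(t) ‖s^{-1/r₁} b₁(s)/a₁(s)‖_{r₁,(t,∞)}, and ρ(t) = t^{θ₁-θ₀} c₀(t)/c₁(t). Then (Ā^𝓛_{θ₀,r₀,b₀,q₀,a₀}, Ā^𝓛_{θ₁,r₁,b₁,q₁,a₁})_{θ,r;a} ≅ Ā_{η,r;a^#}, where η = (1-θ)θ₀ + θθ₁ and a^#(t) = c₀(t)^{1-θ} c₁(t)^θ a(ρ(t)). -/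

import Mathlib

open MeasureTheory Set ENNReal Filter

noncomputable section

/-- The `L_q` quasi-norm (with respect to Lebesgue measure) of an `ℝ≥0∞`-valued
function over a set of reals; for `q = ∞` it is the essential supremum. -/
def LqNorm (q : ℝ≥0∞) (s : Set ℝ) (g : ℝ → ℝ≥0∞) : ℝ≥0∞ :=
  if q = ∞ then essSup g (volume.restrict s)
  else (∫⁻ t in s, g t ^ q.toReal) ^ q⁻¹.toReal

/-- The weight `s ↦ s ^ (-1/r) * b s`, as an `ℝ≥0∞`-valued function
(`1/∞ = 0` by convention). -/
def svWgt (r : ℝ≥0∞) (b : ℝ → ℝ) : ℝ → ℝ≥0∞ :=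
  fun s => ENNReal.ofReal (s ^ (-(r⁻¹.toReal)) * b s)

/-- `f` and `g` are equivalent on `s`: each is bounded by a constant multiple
of the other there. -/
def EquivOn (s : Set ℝ) (f g : ℝ → ℝ) : Prop :=
  ∃ C : ℝ, 0 < C ∧ ∀ t ∈ s, C⁻¹ * g t ≤ f t ∧ f t ≤ C * g t

/-- A positive measurable function `b` on `(0,∞)` is slowly varying if for every
`ε > 0`, `t ^ ε * b t` is equivalent to a non-decreasing function and
`t ^ (-ε) * b t` is equivalent to a non-increasing function. -/
def SlowlyVarying (b : ℝ → ℝ) : Prop :=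
  AEMeasurable b (volume.restrict (Ioi 0)) ∧ (∀ t ∈ Ioi (0:ℝ), 0 < b t) ∧
    ∀ ε : ℝ, 0 < ε →
      (∃ g : ℝ → ℝ, MonotoneOn g (Ioi 0) ∧ EquivOn (Ioi 0) (fun t => t ^ ε * b t) g) ∧
      (∃ g : ℝ → ℝ, AntitoneOn g (Ioi 0) ∧ EquivOn (Ioi 0) (fun t => t ^ (-ε) * b t) g)

/-- A quasi-Banach space continuously embedded into the ambient (Hausdorff) space `E`,
recorded via its extended-real-valued quasi-norm; the space itself is the set of
vectors of finite quasi-norm. -/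
structure QuasiBanach (E : Type*) [AddCommGroup E] [Module ℝ E] where
  N : E → ℝ≥0∞
  zero : N 0 = 0
  definite : ∀ x, N x = 0 → x = 0
  smul : ∀ (c : ℝ) (x : E), N (c • x) = ENNReal.ofReal |c| * N x
  quasi : ∃ C : ℝ≥0∞, 1 ≤ C ∧ C ≠ ∞ ∧ ∀ x y, N (x + y) ≤ C * (N x + N y)
  complete : ∀ f : ℕ → E,
    (∀ ε : ℝ≥0∞, 0 < ε → ∃ M : ℕ, ∀ m ≥ M, ∀ n ≥ M, N (f m - f n) < ε) →
    (∀ n, N (f n) ≠ ∞) →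
    ∃ g : E, N g ≠ ∞ ∧ Tendsto (fun n => N (f n - g)) atTop (nhds 0)

variable {E : Type*} [AddCommGroup E] [Module ℝ E]

/-- The Peetre K-functional of the couple whose quasi-norms are `N₀`, `N₁`. -/
def Kf (N₀ N₁ : E → ℝ≥0∞) (t : ℝ) (f : E) : ℝ≥0∞ :=
  ⨅ g : E, N₀ g + ENNReal.ofReal t * N₁ (f - g)

/-- The quasi-norm of the real interpolation space `Ā_{θ,q;b}`. -/
def normK (N₀ N₁ : E → ℝ≥0∞) (θ : ℝ) (q : ℝ≥0∞) (b : ℝ → ℝ) (f : E) : ℝ≥0∞ :=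
  LqNorm q (Ioi 0) fun u =>
    ENNReal.ofReal (u ^ (-θ - q⁻¹.toReal) * b u) * Kf N₀ N₁ u f

/-- The quasi-norm of the limiting interpolation space `Ā^𝓛_{σ,r,b,q,a}`. -/
def normL (N₀ N₁ : E → ℝ≥0∞) (σ : ℝ) (r q : ℝ≥0∞) (b a : ℝ → ℝ) (f : E) : ℝ≥0∞ :=
  LqNorm r (Ioi 0) fun t =>
    ENNReal.ofReal (t ^ (-(r⁻¹.toReal)) * (b t / a t)) *
      LqNorm q (Ioo 0 t) fun u =>
        ENNReal.ofReal (u ^ (-σ - q⁻¹.toReal) * a u) * Kf N₀ N₁ u f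

/-- The quasi-norm of the limiting interpolation space `Ā^𝓡_{σ,r,b,q,a}`. -/
def normR (N₀ N₁ : E → ℝ≥0∞) (σ : ℝ) (r q : ℝ≥0∞) (b a : ℝ → ℝ) (f : E) : ℝ≥0∞ :=
  LqNorm r (Ioi 0) fun t =>
    ENNReal.ofReal (t ^ (-(r⁻¹.toReal)) * (b t / a t)) *
      LqNorm q (Ioi t) fun u =>
        ENNReal.ofReal (u ^ (-σ - q⁻¹.toReal) * a u) * Kf N₀ N₁ u f

/-- Two (extended-real-valued) quasi-norms define the same space with
equivalent quasi-norms. -/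
def EquivNorms (nX nY : E → ℝ≥0∞) : Prop :=
  ∃ C : ℝ≥0∞, 0 < C ∧ C ≠ ∞ ∧ ∀ f : E, C⁻¹ * nY f ≤ nX f ∧ nX f ≤ C * nY f

/-!
By slow variation the 𝓛-space with parameters `σ, r, b, q, a` lies between the interpolation
spaces with weight `v t = t ^ (-σ) * c t` and exponents `p` and `∞`, for every `p ≤ min q r`: the
lower bound comes from the monotonicity in `t` of the inner norm over `(0, t)`, the upper bound from
`ℓ^p ⊆ ℓ^q, ℓ^r` on dyadic blocks. Only this enters the reiteration of two such spaces, with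
weights `v₀`, `v₁` and quasi-norms `L₀`, `L₁`. Put `ρ = v₀ / v₁`.

The lower bounds give `v₀ t * K(t, f) ≲ K(ρ t, f; L₀, L₁)`. Conversely, decompose `f` nearly
optimally at `t = l ^ k` for the original couple; the upper bounds control `L₀` and `L₁` of the two
pieces, weighted by the outer weight at `ρ (l ^ k)`, by `ℓ^p` sums over `j` of the terms
`W (l ^ j) * K(l ^ j, f)`, `W` the weight of the target space, with factors decaying geometrically
in `|j - k|`, because `0 < θ < 1` and `0 < θ₀ < θ₁ < 1` keep all the indices of regular variation
away from `0`. A discrete Hardy inequality in `ℓ^r`, `p ≤ r`, sums these bounds over `k`.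
-/

open scoped NNReal

section Domination

variable {ι : Type*} {F F' H : ι → ℝ≥0∞}

/-- `F ≲ H`: the family `F` is bounded by a finite constant multiple of the family `H`. Used for
quasi-norms it says that the space of `H` is continuously embedded in the space of `F`. -/
def Dominated (F H : ι → ℝ≥0∞) : Prop := ∃ C : ℝ≥0, ∀ i, F i ≤ C * H i

infix:50 " ≲ " => Dominated

theorem Dominated.trans (h : F ≲ F') (h' : F' ≲ H) : F ≲ H := by
  obtain ⟨C, hC⟩ := h
  obtain ⟨C', hC'⟩ := h'
  refine ⟨C * C', fun i => (hC i).trans ?_⟩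
  rw [ENNReal.coe_mul, mul_assoc]
  gcongr
  exact hC' i

theorem EquivNorms.of_dominated {G : Type*} {nX nY : G → ℝ≥0∞} (h : nX ≲ nY) (h' : nY ≲ nX) :
    EquivNorms nX nY := by
  obtain ⟨C, hC⟩ := h
  obtain ⟨C', hC'⟩ := h'
  refine ⟨(C + C' + 1 : ℝ≥0), by simp, coe_ne_top, fun f => ⟨?_, (hC f).trans ?_⟩⟩
  · rw [← ENNReal.div_eq_inv_mul]
    refine ENNReal.div_le_of_le_mul' ((hC' f).trans ?_)
    gcongr
    exact le_add_right le_add_self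
  · gcongr
    rw [add_assoc]
    exact le_self_add

end Domination

section QuasiNorm

variable {G : Type*} [AddCommGroup G] {N₀ N₁ : G → ℝ≥0∞}

/-- An extended-real-valued quasi-norm on an abelian group: all that real interpolation needs to
know about a quasi-Banach space. -/
structure IsQuasiNorm (N : G → ℝ≥0∞) : Prop where
  map_zero : N 0 = 0
  map_neg : ∀ x, N (-x) = N x
  add_le : ∃ C : ℝ≥0, ∀ x y, N (x + y) ≤ C * (N x + N y)

theorem QuasiBanach.isQuasiNorm {V : Type*} [AddCommGroup V] [Module ℝ V] (A : QuasiBanach V) :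
    IsQuasiNorm A.N where
  map_zero := A.zero
  map_neg x := by simpa using A.smul (-1) x
  add_le := by
    obtain ⟨C, -, hC, h⟩ := A.quasi
    exact ⟨C.toNNReal, by rwa [ENNReal.coe_toNNReal hC]⟩

theorem Kf_le_left (h₁ : N₁ 0 = 0) (t : ℝ) (f : G) : Kf N₀ N₁ t f ≤ N₀ f :=
  iInf_le_of_le f (by simp [h₁])

theorem Kf_le_right (h₀ : N₀ 0 = 0) (t : ℝ) (f : G) :
    Kf N₀ N₁ t f ≤ ENNReal.ofReal t * N₁ f :=
  iInf_le_of_le 0 (by simp [h₀])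

theorem Kf_zero (h₀ : N₀ 0 = 0) (h₁ : N₁ 0 = 0) (t : ℝ) : Kf N₀ N₁ t 0 = 0 :=
  le_antisymm ((Kf_le_left h₁ t 0).trans h₀.le) zero_le

theorem Kf_neg (h₀ : IsQuasiNorm N₀) (h₁ : IsQuasiNorm N₁) (t : ℝ) (f : G) :
    Kf N₀ N₁ t (-f) = Kf N₀ N₁ t f := by
  refine (Equiv.neg G).iInf_congr fun g => ?_
  rw [Equiv.neg_apply, h₀.map_neg, ← h₁.map_neg (-f - g)]
  congr 3
  abel

theorem exists_Kf_add_le (h₀ : IsQuasiNorm N₀) (h₁ : IsQuasiNorm N₁) :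
    ∃ C : ℝ≥0, ∀ t x y, Kf N₀ N₁ t (x + y) ≤ C * (Kf N₀ N₁ t x + Kf N₀ N₁ t y) := by
  obtain ⟨C₀, hC₀⟩ := h₀.add_le
  obtain ⟨C₁, hC₁⟩ := h₁.add_le
  have hne : ((C₀ + C₁ + 1 : ℝ≥0) : ℝ≥0∞) ≠ 0 := by simp
  refine ⟨C₀ + C₁ + 1, fun t x y => ?_⟩
  simp only [Kf, ENNReal.iInf_add, ENNReal.add_iInf, ENNReal.mul_iInf_of_ne hne coe_ne_top]
  refine le_iInf₂ fun k g => (iInf_le _ (g + k)).trans ?_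
  calc N₀ (g + k) + ENNReal.ofReal t * N₁ (x + y - (g + k))
      ≤ C₀ * (N₀ g + N₀ k) + ENNReal.ofReal t * (C₁ * (N₁ (x - g) + N₁ (y - k))) := by
        rw [add_sub_add_comm]
        gcongr
        exacts [hC₀ _ _, hC₁ _ _]
    _ ≤ (C₀ + C₁ + 1 : ℝ≥0) * (N₀ g + N₀ k) +
          ENNReal.ofReal t * ((C₀ + C₁ + 1 : ℝ≥0) * (N₁ (x - g) + N₁ (y - k))) := by
        gcongr
        · rw [add_assoc]
          exact le_self_add
        · exact le_add_right le_add_self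
    _ = _ := by ring

theorem Kf_le_max_mul {s : ℝ} (hs : 0 < s) (t : ℝ) (f : G) :
    Kf N₀ N₁ t f ≤ ENNReal.ofReal (max 1 (t / s)) * Kf N₀ N₁ s f := by
  have hmax : 0 < max 1 (t / s) := one_pos.trans_le (le_max_left _ _)
  rw [Kf, Kf, ENNReal.mul_iInf_of_ne (ENNReal.ofReal_pos.2 hmax).ne' ENNReal.ofReal_ne_top]
  refine iInf_mono fun g => ?_
  rw [mul_add, ← mul_assoc, ← ENNReal.ofReal_mul hmax.le]
  gcongr
  · exact le_mul_of_one_le_left' (by simp)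
  · exact (div_le_iff₀ hs).1 (le_max_right _ _)

theorem Kf_mono {s t : ℝ} (hs : 0 < s) (hst : s ≤ t) (f : G) : Kf N₀ N₁ s f ≤ Kf N₀ N₁ t f := by
  simpa [max_eq_left ((div_le_one (hs.trans_le hst)).2 hst)] using
    Kf_le_max_mul (N₀ := N₀) (N₁ := N₁) (hs.trans_le hst) s f

theorem ofReal_div_mul_Kf_le {s t : ℝ} (hs : 0 < s) (hst : s ≤ t) (f : G) :
    ENNReal.ofReal (s / t) * Kf N₀ N₁ t f ≤ Kf N₀ N₁ s f := by
  have ht : 0 < t := hs.trans_le hst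
  have h := Kf_le_max_mul (N₀ := N₀) (N₁ := N₁) hs t f
  rw [max_eq_right ((one_le_div hs).2 hst)] at h
  calc ENNReal.ofReal (s / t) * Kf N₀ N₁ t f
      ≤ ENNReal.ofReal (s / t) * (ENNReal.ofReal (t / s) * Kf N₀ N₁ s f) := by gcongr
    _ = Kf N₀ N₁ s f := by
      rw [← mul_assoc, ← ENNReal.ofReal_mul (by positivity), div_mul_div_cancel₀ ht.ne',
        div_self hs.ne', ENNReal.ofReal_one, one_mul]

theorem exists_Kf_le_two_mul (h₀ : N₀ 0 = 0) (h₁ : N₁ 0 = 0) {t : ℝ} (ht : 0 < t) (f : G) :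
    ∃ g, ∀ s, 0 < s → Kf N₀ N₁ s g ≤ 2 * Kf N₀ N₁ t f ∧
      Kf N₀ N₁ s (f - g) ≤ 2 * (ENNReal.ofReal (s / t) * Kf N₀ N₁ t f) := by
  by_cases hdeg : Kf N₀ N₁ t f = 0 ∨ Kf N₀ N₁ t f = ∞
  · refine ⟨0, fun s hs => ⟨by simp [Kf_zero h₀ h₁], ?_⟩⟩
    rw [sub_zero]
    rcases hdeg with h | h
    · simpa [h] using Kf_le_max_mul (N₀ := N₀) (N₁ := N₁) ht s f
    · simp [h, ENNReal.mul_top, div_pos hs ht]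
  · push Not at hdeg
    have hlt : Kf N₀ N₁ t f < 2 * Kf N₀ N₁ t f := by
      rw [two_mul]
      exact ENNReal.lt_add_right hdeg.2 hdeg.1
    obtain ⟨g, hg⟩ := iInf_lt_iff.1 hlt
    refine ⟨g, fun s hs => ⟨(Kf_le_left h₁ s g).trans (le_self_add.trans hg.le), ?_⟩⟩
    calc Kf N₀ N₁ s (f - g) ≤ ENNReal.ofReal s * N₁ (f - g) := Kf_le_right h₀ s _
      _ = ENNReal.ofReal (s / t) * (ENNReal.ofReal t * N₁ (f - g)) := by
        rw [← mul_assoc, ← ENNReal.ofReal_mul (by positivity), div_mul_cancel₀ _ ht.ne']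
      _ ≤ ENNReal.ofReal (s / t) * (2 * Kf N₀ N₁ t f) :=
        mul_le_mul_right (le_add_self.trans hg.le) _
      _ = _ := mul_left_comm _ _ _

theorem exists_Kf_decomposition (h₀ : IsQuasiNorm N₀) (h₁ : IsQuasiNorm N₁) :
    ∃ C : ℝ≥0, ∀ f t, 0 < t → ∃ g, ∀ s, 0 < s →
      Kf N₀ N₁ s g ≤ C * min (Kf N₀ N₁ s f) (Kf N₀ N₁ t f) ∧
      Kf N₀ N₁ s (f - g) ≤
        C * min (Kf N₀ N₁ s f) (ENNReal.ofReal (s / t) * Kf N₀ N₁ t f) := by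
  obtain ⟨C, hC⟩ := exists_Kf_add_le h₀ h₁
  refine ⟨3 * C + 2, fun f t ht => ?_⟩
  obtain ⟨g, hg⟩ := exists_Kf_le_two_mul h₀.map_zero h₁.map_zero ht f
  refine ⟨g, fun s hs => ?_⟩
  have hsub (x y : G) : Kf N₀ N₁ s (x - y) ≤ C * (Kf N₀ N₁ s x + Kf N₀ N₁ s y) := by
    rw [sub_eq_add_neg, ← Kf_neg h₀ h₁ s y]
    exact hC s x (-y)
  have h2 (x : ℝ≥0∞) : 2 * x ≤ (3 * C + 2 : ℝ≥0) * x := by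
    push_cast
    gcongr
    exact le_add_self
  have h3 {x y : ℝ≥0∞} (hy : y ≤ 2 * x) : C * (x + y) ≤ (3 * C + 2 : ℝ≥0) * x := by
    calc C * (x + y) ≤ C * (x + 2 * x) := by gcongr
      _ = (3 * C : ℝ≥0) * x := by push_cast; ring
      _ ≤ _ := by gcongr; exact le_self_add
  have hs_f : Kf N₀ N₁ s g ≤ (3 * C + 2 : ℝ≥0) * Kf N₀ N₁ s f ∧
      Kf N₀ N₁ s (f - g) ≤ (3 * C + 2 : ℝ≥0) * Kf N₀ N₁ s f := by
    rcases le_total s t with hst | hts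
    · have hb := (hg s hs).2.trans (mul_le_mul_right (ofReal_div_mul_Kf_le hs hst f) 2)
      refine ⟨?_, hb.trans (h2 _)⟩
      rw [← sub_sub_cancel f g]
      exact (hsub f (f - g)).trans (h3 hb)
    · have hb := (hg s hs).1.trans (mul_le_mul_right (Kf_mono ht hts f) 2)
      exact ⟨hb.trans (h2 _), (hsub f g).trans (h3 hb)⟩
  rw [mul_min, mul_min]
  exact ⟨le_min hs_f.1 ((hg s hs).1.trans (h2 _)), le_min hs_f.2 ((hg s hs).2.trans (h2 _))⟩

end QuasiNorm

section Lp

variable {α ι : Type*} [MeasurableSpace α] {μ : Measure α} {p r : ℝ≥0∞} {f g : α → ℝ≥0∞}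

theorem eLpNorm_le_coe_mul {C : ℝ≥0} (h : ∀ᵐ x ∂μ, f x ≤ C * g x) (p : ℝ≥0∞) :
    eLpNorm f p μ ≤ C * eLpNorm g p μ :=
  eLpNorm_le_nnreal_smul_eLpNorm_of_ae_le_mul' h p

theorem eLpNorm_ennreal_const_mul (hf : AEMeasurable f μ) (c p : ℝ≥0∞) :
    eLpNorm (fun x => c * f x) p μ = c * eLpNorm f p μ := by
  rcases eq_or_ne p 0 with rfl | hp
  · simp
  rcases eq_or_ne p ∞ with rfl | hp'
  · simp only [eLpNorm_exponent_top, eLpNormEssSup, enorm_eq_self, ENNReal.essSup_const_mul]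
  have hpos : 0 < p.toReal := ENNReal.toReal_pos hp hp'
  simp only [eLpNorm_eq_lintegral_rpow_enorm_toReal hp hp', enorm_eq_self,
    ENNReal.mul_rpow_of_nonneg _ _ hpos.le]
  rw [lintegral_const_mul'' _ (hf.pow_const _), ENNReal.mul_rpow_of_nonneg _ _ (by positivity),
    one_div, ENNReal.rpow_rpow_inv hpos.ne']

theorem eLpNorm_restrict_le_of_forall_le {s : Set α} (hs : MeasurableSet s) {c : ℝ≥0∞}
    (h : ∀ x ∈ s, f x ≤ c) (p : ℝ≥0∞) :
    eLpNorm f p (μ.restrict s) ≤ c * μ s ^ (1 / p.toReal) := by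
  rcases eq_or_ne p 0 with rfl | hp
  · simp
  rcases eq_or_ne (μ.restrict s) 0 with h0 | h0
  · simp [h0]
  have hae : ∀ᵐ x ∂μ.restrict s, ‖f x‖ₑ ≤ ‖c‖ₑ :=
    (ae_restrict_iff' hs).2 (Eventually.of_forall h)
  simpa using (eLpNorm_mono_enorm_ae hae).trans_eq (eLpNorm_const c hp h0)

theorem mul_rpow_le_eLpNorm_restrict {s : Set α} (hs : MeasurableSet s) (hμ : μ s ≠ 0)
    {c : ℝ≥0∞} (h : ∀ x ∈ s, c ≤ f x) (hp : p ≠ 0) :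
    c * μ s ^ (1 / p.toReal) ≤ eLpNorm f p (μ.restrict s) := by
  have hae : ∀ᵐ x ∂μ.restrict s, ‖c‖ₑ ≤ ‖f x‖ₑ :=
    (ae_restrict_iff' hs).2 (Eventually.of_forall h)
  have hconst := eLpNorm_const c hp (mt Measure.restrict_eq_zero.1 hμ)
  simpa using hconst.symm.le.trans (eLpNorm_mono_enorm_ae hae)

theorem eLpNorm_tsum_le [Countable ι] {F : ι → α → ℝ≥0∞} (hF : ∀ i, AEMeasurable (F i) μ)
    (hp : 1 ≤ p) : eLpNorm (fun x => ∑' i, F i x) p μ ≤ ∑' i, eLpNorm (F i) p μ := by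
  have hfin (s : Finset ι) : eLpNorm (fun x => ∑ i ∈ s, F i x) p μ ≤ ∑' i, eLpNorm (F i) p μ := by
    refine le_trans ?_ (ENNReal.sum_le_tsum s)
    simpa only [Finset.sum_fn] using
      eLpNorm_sum_le (s := s) (fun i _ => (hF i).aestronglyMeasurable) hp
  have hmeas (s : Finset ι) : AEMeasurable (fun x => ∑ i ∈ s, F i x) μ :=
    Finset.aemeasurable_fun_sum s fun i _ => hF i
  refine le_trans ?_ (iSup_le hfin)
  simp only [ENNReal.tsum_eq_iSup_sum]
  rcases eq_or_ne p ∞ with rfl | hp'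
  · simp only [eLpNorm_exponent_top, eLpNormEssSup, enorm_eq_self]
    refine essSup_le_of_ae_le _ ?_
    filter_upwards [ae_all_iff.2 fun s : Finset ι => ae_le_essSup fun x => ∑ i ∈ s, F i x]
      with x hx using iSup_mono hx
  have hp0 : p ≠ 0 := (one_pos.trans_le hp).ne'
  have hpos : 0 < p.toReal := ENNReal.toReal_pos hp0 hp'
  have hiSup {s : ℝ} (hs : 0 < s) (y : Finset ι → ℝ≥0∞) : (⨆ k, y k) ^ s = ⨆ k, y k ^ s :=
    (ENNReal.orderIsoRpow s hs).map_iSup y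
  simp only [eLpNorm_eq_lintegral_rpow_enorm_toReal hp0 hp', enorm_eq_self, hiSup hpos]
  rw [lintegral_iSup_directed (fun s => (hmeas s).pow_const _), hiSup (by positivity)]
  exact Monotone.directed_le fun s t hst x =>
    ENNReal.rpow_le_rpow (Finset.sum_le_sum_of_subset hst) hpos.le

variable [MeasurableSpace ι] [MeasurableSingletonClass ι]

theorem eLpNorm_count (hp : p ≠ 0) (hp' : p ≠ ∞) (y : ι → ℝ≥0∞) :
    eLpNorm y p Measure.count = (∑' i, y i ^ p.toReal) ^ (1 / p.toReal) := by
  simp only [eLpNorm_eq_lintegral_rpow_enorm_toReal hp hp', enorm_eq_self, lintegral_count]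

theorem eLpNorm_eLpNorm_count_le [Countable ι] {F : ι → α → ℝ≥0∞}
    (hF : ∀ i, AEMeasurable (F i) μ) (hp : p ≠ 0) (hp' : p ≠ ∞) (hpr : p ≤ r) :
    eLpNorm (fun x => eLpNorm (fun i => F i x) p Measure.count) r μ ≤
      eLpNorm (fun i => eLpNorm (F i) r μ) p Measure.count := by
  have hpos : 0 < p.toReal := ENNReal.toReal_pos hp hp'
  set s := r * ENNReal.ofReal (1 / p.toReal) with hs
  have hs_one : 1 ≤ s := by
    rw [hs, one_div, ENNReal.ofReal_inv_of_pos hpos, ENNReal.ofReal_toReal hp', ← div_eq_mul_inv]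
    exact (ENNReal.le_div_iff_mul_le (.inl hp) (.inl hp')).2 (by rwa [one_mul])
  have hs_mul : s * ENNReal.ofReal p.toReal = r := by
    rw [hs, mul_assoc, ← ENNReal.ofReal_mul (by positivity), one_div_mul_cancel hpos.ne',
      ENNReal.ofReal_one, mul_one]
  have hpow (i : ι) : eLpNorm (fun x => F i x ^ p.toReal) s μ = eLpNorm (F i) r μ ^ p.toReal := by
    simpa [hs_mul] using eLpNorm_enorm_rpow (p := s) (μ := μ) (F i) hpos
  calc eLpNorm (fun x => eLpNorm (fun i => F i x) p Measure.count) r μ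
      = eLpNorm (fun x => ∑' i, F i x ^ p.toReal) s μ ^ (1 / p.toReal) := by
        simp only [eLpNorm_count hp hp']
        exact eLpNorm_enorm_rpow (fun x => ∑' i, F i x ^ p.toReal) (by positivity)
    _ ≤ (∑' i, eLpNorm (F i) r μ ^ p.toReal) ^ (1 / p.toReal) := by
        simp only [← hpow]
        gcongr
        exact eLpNorm_tsum_le (fun i => (hF i).pow_const _) hs_one
    _ = _ := (eLpNorm_count hp hp' _).symm

theorem eLpNorm_count_anti [Countable ι] (hp : p ≠ 0) (hp' : p ≠ ∞) (hpr : p ≤ r)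
    (y : ι → ℝ≥0∞) : eLpNorm y r Measure.count ≤ eLpNorm y p Measure.count := by
  have hsingle (i : ι) {q : ℝ≥0∞} (hq : q ≠ 0) :
      eLpNorm (({i} : Set ι).indicator y) q Measure.count = y i := by
    rw [eLpNorm_indicator_eq_eLpNorm_restrict (measurableSet_singleton i),
      Measure.restrict_singleton, Measure.count_singleton, one_smul,
      eLpNorm_dirac _ _ hq]
    simp
  have hswap (x : ι) : (fun i => ({i} : Set ι).indicator y x) = ({x} : Set ι).indicator y := by
    ext i
    by_cases h : x = i <;> simp [indicator, h, Ne.symm]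
  simpa only [hswap, hsingle _ hp, hsingle _ (hp.bot_lt.trans_le hpr).ne'] using
    eLpNorm_eLpNorm_count_le (F := fun i => ({i} : Set ι).indicator y) (μ := Measure.count)
      (fun i => Measurable.of_discrete.aemeasurable) hp hp' hpr

theorem eLpNorm_restrict_iUnion [Countable ι] {s : ι → Set α} (hs : ∀ i, MeasurableSet (s i))
    (hd : Pairwise (Function.onFun Disjoint s)) (f : α → ℝ≥0∞) (hp : p ≠ 0) :
    eLpNorm f p (μ.restrict (⋃ i, s i)) =
      eLpNorm (fun i => eLpNorm f p (μ.restrict (s i))) p Measure.count := by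
  rcases eq_or_ne p ∞ with rfl | hp'
  · simp only [eLpNorm_exponent_top, eLpNormEssSup_count, enorm_eq_self]
    refine le_antisymm (essSup_le_of_ae_le _ ((ae_restrict_iUnion_iff _ _).2 fun i => ?_))
      (iSup_le fun i => eLpNormEssSup_mono_measure f ?_)
    · filter_upwards [ae_le_essSup (fun x => ‖f x‖ₑ) (μ := μ.restrict (s i))] with x hx
      exact hx.trans (le_iSup (fun i => eLpNormEssSup f (μ.restrict (s i))) i)
    · exact Measure.absolutelyContinuous_of_le (Measure.restrict_mono_set μ (subset_iUnion s i))
  have hpos : 0 < p.toReal := ENNReal.toReal_pos hp hp'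
  rw [eLpNorm_count hp hp']
  simp only [eLpNorm_eq_lintegral_rpow_enorm_toReal hp hp', one_div,
    ENNReal.rpow_inv_rpow hpos.ne', Measure.restrict_iUnion hd hs, lintegral_sum_measure]

end Lp

section Hardy

variable {p r : ℝ≥0∞} {γ : ℝ≥0}

theorem eLpNorm_count_comp_add_right (y : ℤ → ℝ≥0∞) (i : ℤ) (p : ℝ≥0∞) :
    eLpNorm (fun k => y (k + i)) p Measure.count = eLpNorm y p Measure.count :=
  eLpNorm_comp_measurePreserving (Measurable.of_discrete.aestronglyMeasurable)
    (measurePreserving_add_right Measure.count i)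

theorem eLpNorm_count_pow_natAbs_ne_top (hγ : γ < 1) (hp : p ≠ 0) (hp' : p ≠ ∞) :
    eLpNorm (fun i : ℤ => (γ : ℝ≥0∞) ^ i.natAbs) p Measure.count ≠ ∞ := by
  have hpos : 0 < p.toReal := ENNReal.toReal_pos hp hp'
  have hγp : ((γ : ℝ≥0∞) ^ p.toReal) < 1 := ENNReal.rpow_lt_one (by exact_mod_cast hγ) hpos
  rw [eLpNorm_count hp hp']
  refine ENNReal.rpow_ne_top_of_nonneg (by positivity) ?_
  have hpow (n : ℕ) : ((γ : ℝ≥0∞) ^ n) ^ p.toReal = ((γ : ℝ≥0∞) ^ p.toReal) ^ n := by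
    rw [← ENNReal.rpow_natCast_mul, ← ENNReal.rpow_mul_natCast, mul_comm]
  simp only [hpow]
  have hneg (n : ℕ) : (-((n : ℤ) + 1)).natAbs = n + 1 := by omega
  rw [tsum_of_nat_of_neg_add_one ENNReal.summable ENNReal.summable]
  simp only [Int.natAbs_natCast, hneg, pow_succ, ENNReal.tsum_mul_right]
  have hgeo := tsum_geometric_lt_top.2 hγp
  exact ENNReal.add_ne_top.2 ⟨hgeo.ne, ENNReal.mul_ne_top hgeo.ne hγp.ne_top⟩

/-- The two-sided discrete Hardy operator with decay `γ`, in the form in which it meets the pieces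
of a `K`-functional decomposition: an `ℓ^p` mean in place of a sum, and the entry `x k` included. -/
def hardyMean (γ : ℝ≥0) (p : ℝ≥0∞) (x : ℤ → ℝ≥0∞) (k : ℤ) : ℝ≥0∞ :=
  eLpNorm (fun j => (γ : ℝ≥0∞) ^ (j - k).natAbs * (x j + x k)) p Measure.count

theorem hardyMean_mono {γ' : ℝ≥0} (h : γ ≤ γ') (p : ℝ≥0∞) (x : ℤ → ℝ≥0∞) (k : ℤ) :
    hardyMean γ p x k ≤ hardyMean γ' p x k :=
  eLpNorm_mono_enorm fun j => by
    simp only [enorm_eq_self]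
    gcongr

theorem hardyMean_dominated (hγ : γ < 1) (hp : p ≠ 0) (hp' : p ≠ ∞) (hpr : p ≤ r) :
    (fun x => eLpNorm (hardyMean γ p x) r Measure.count) ≲ fun x => eLpNorm x r Measure.count := by
  set S := eLpNorm (fun i : ℤ => (γ : ℝ≥0∞) ^ i.natAbs) p Measure.count
  have hS_top : S ≠ ∞ := eLpNorm_count_pow_natAbs_ne_top hγ hp hp'
  refine ⟨S.toNNReal * (2 * r.LpAddConst.toNNReal), fun x => ?_⟩
  have hshift : hardyMean γ p x = fun k =>
      eLpNorm (fun i => (γ : ℝ≥0∞) ^ i.natAbs * (x (k + i) + x k)) p Measure.count := by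
    ext k
    rw [hardyMean, ← eLpNorm_count_comp_add_right _ k]
    simp only [add_sub_cancel_right, add_comm k]
  have hnorm (i : ℤ) : eLpNorm (fun k => (γ : ℝ≥0∞) ^ i.natAbs * (x (k + i) + x k)) r
      Measure.count ≤
      γ ^ i.natAbs * (r.LpAddConst * (2 * eLpNorm x r Measure.count)) := by
    rw [eLpNorm_ennreal_const_mul Measurable.of_discrete.aemeasurable, two_mul]
    gcongr
    refine (eLpNorm_add_le' Measurable.of_discrete.aestronglyMeasurable
      Measurable.of_discrete.aestronglyMeasurable r).trans_eq ?_
    rw [eLpNorm_count_comp_add_right]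
  simp only [hshift]
  calc _ ≤ eLpNorm (fun i => eLpNorm (fun k => (γ : ℝ≥0∞) ^ i.natAbs * (x (k + i) + x k)) r
          Measure.count) p Measure.count :=
        eLpNorm_eLpNorm_count_le (fun i => Measurable.of_discrete.aemeasurable) hp hp' hpr
    _ ≤ eLpNorm (fun i : ℤ => (r.LpAddConst * (2 * eLpNorm x r Measure.count)) * γ ^ i.natAbs) p
          Measure.count := eLpNorm_mono_enorm fun i => (hnorm i).trans_eq (mul_comm _ _)
    _ = r.LpAddConst * (2 * eLpNorm x r Measure.count) * S :=
        eLpNorm_ennreal_const_mul Measurable.of_discrete.aemeasurable _ _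
    _ = _ := by
        rw [ENNReal.coe_mul, ENNReal.coe_mul, ENNReal.coe_toNNReal hS_top,
          ENNReal.coe_toNNReal r.LpAddConst_lt_top.ne, ENNReal.coe_ofNat]
        ring

end Hardy

section LogMeasure

/-- The dilation-invariant measure `du / u` on `(0, ∞)`, in terms of which the interpolation norms
are ordinary weighted `L^q` norms of the K-functional. -/
def logMeasure : Measure ℝ :=
  (volume.restrict (Ioi 0)).withDensity fun u => ENNReal.ofReal u⁻¹

theorem ae_logMeasure_pos : ∀ᵐ u ∂logMeasure, 0 < u :=
  withDensity_absolutelyContinuous _ _ (ae_restrict_mem measurableSet_Ioi)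

theorem logMeasure_restrict_Ioi_zero : logMeasure.restrict (Ioi 0) = logMeasure :=
  Measure.restrict_eq_self_of_ae_mem ae_logMeasure_pos

theorem map_exp_volume : volume.map Real.exp = logMeasure := by
  ext s hs
  rw [Measure.map_apply Real.measurable_exp hs, logMeasure, withDensity_apply _ hs,
    ← lintegral_indicator hs, ← Real.range_exp, ← image_univ,
    lintegral_image_eq_lintegral_abs_deriv_mul MeasurableSet.univ
      (fun x _ => (Real.hasDerivAt_exp x).hasDerivWithinAt) Real.exp_injective.injOn,
    Measure.restrict_univ, ← lintegral_indicator_one (Real.measurable_exp hs)]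
  refine lintegral_congr fun x => ?_
  by_cases hx : Real.exp x ∈ s
  · simp [hx, Real.exp_pos, ENNReal.mul_inv_cancel]
  · simp [hx]

theorem logMeasure_Ico {x z : ℝ} (hx : 0 < x) (hz : 0 < z) :
    logMeasure (Ico x z) = ENNReal.ofReal (Real.log (z / x)) := by
  have hpre : Real.exp ⁻¹' Ico x z = Ico (Real.log x) (Real.log z) := by
    ext y
    simp only [mem_preimage, mem_Ico, Real.log_le_iff_le_exp hx, Real.lt_log_iff_exp_lt hz]
  rw [← map_exp_volume, Measure.map_apply Real.measurable_exp measurableSet_Ico, hpre,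
    Real.volume_Ico, Real.log_div hz.ne' hx.ne']

theorem measurePreserving_mul_left_logMeasure {c : ℝ} (hc : 0 < c) :
    MeasurePreserving (c * ·) logMeasure logMeasure := by
  refine ⟨measurable_const_mul c, ?_⟩
  have hexp : (c * ·) ∘ Real.exp = Real.exp ∘ (Real.log c + ·) := by
    ext x
    simp [Real.exp_add, Real.exp_log hc]
  rw [← map_exp_volume, Measure.map_map (measurable_const_mul c) Real.measurable_exp, hexp,
    ← Measure.map_map Real.measurable_exp (measurable_const_add _), map_add_left_eq_self]

theorem eLpNorm_Ioi_mul_logMeasure {c : ℝ} (hc : 0 < c) (s : ℝ) (f : ℝ → ℝ≥0∞) (r : ℝ≥0∞) :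
    eLpNorm f r (logMeasure.restrict (Ioi (c * s))) =
      eLpNorm (fun u => f (c * u)) r (logMeasure.restrict (Ioi s)) := by
  have hemb : MeasurableEmbedding (c * ·) := measurableEmbedding_mulLeft₀ hc.ne'
  have hmap := ((measurePreserving_mul_left_logMeasure hc).restrict_preimage_emb hemb
    (Ioi (c * s))).map_eq
  have hpre : (c * ·) ⁻¹' Ioi (c * s) = Ioi s := by
    ext u
    exact mul_lt_mul_iff_right₀ hc
  rw [← hmap, hemb.eLpNorm_map_measure, hpre]
  rfl

theorem LqNorm_congr {s : Set ℝ} (hs : MeasurableSet s) {f g : ℝ → ℝ≥0∞} (h : EqOn f g s)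
    (q : ℝ≥0∞) : LqNorm q s f = LqNorm q s g := by
  rw [LqNorm, LqNorm, essSup_congr_ae ((ae_restrict_iff' hs).2 (Eventually.of_forall h)),
    setLIntegral_congr_fun hs fun u hu => by rw [h hu]]

theorem LqNorm_rpow_mul_eq_eLpNorm {q : ℝ≥0∞} (hq : q ≠ 0) {s : Set ℝ} (hs : MeasurableSet s)
    (hs_pos : s ⊆ Ioi 0) (g : ℝ → ℝ≥0∞) :
    LqNorm q s (fun u => ENNReal.ofReal (u ^ (-q⁻¹.toReal)) * g u) =
      eLpNorm g q (logMeasure.restrict s) := by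
  have hrestrict : (volume.restrict (Ioi (0 : ℝ))).restrict s = volume.restrict s := by
    rw [Measure.restrict_restrict hs, inter_eq_left.2 hs_pos]
  have hmeas : Measurable fun u : ℝ => ENNReal.ofReal u⁻¹ := by fun_prop
  rw [logMeasure, restrict_withDensity hs, hrestrict]
  rcases eq_or_ne q ∞ with rfl | hq'
  · simp only [LqNorm, if_true, inv_top, toReal_zero, neg_zero, Real.rpow_zero, ofReal_one, one_mul,
      eLpNorm_exponent_top, eLpNormEssSup, enorm_eq_self]
    have hdens : ∀ᵐ u ∂volume.restrict s, ENNReal.ofReal u⁻¹ ≠ 0 := by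
      filter_upwards [ae_restrict_mem hs] with u hu
      simpa using hs_pos hu
    exact le_antisymm
      (essSup_mono_measure (withDensity_absolutelyContinuous' hmeas.aemeasurable hdens))
      (essSup_mono_measure (withDensity_absolutelyContinuous _ _))
  · have hpos : 0 < q.toReal := ENNReal.toReal_pos hq hq'
    rw [eLpNorm_eq_lintegral_rpow_enorm_toReal hq hq',
      lintegral_withDensity_eq_lintegral_mul_non_measurable _ hmeas (by simp), LqNorm, if_neg hq',
      ENNReal.toReal_inv, one_div]
    congr 1
    refine setLIntegral_congr_fun hs fun u hu => ?_
    have hu_pos : 0 < u := hs_pos hu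
    simp only [enorm_eq_self, Pi.mul_apply]
    rw [ENNReal.mul_rpow_of_nonneg _ _ hpos.le, ENNReal.ofReal_rpow_of_pos (by positivity),
      ← Real.rpow_mul hu_pos.le, neg_mul, inv_mul_cancel₀ hpos.ne', Real.rpow_neg_one]

theorem LqNorm_rpow_sub_mul_eq_eLpNorm {q : ℝ≥0∞} (hq : q ≠ 0) {s : Set ℝ}
    (hs : MeasurableSet s) (hs_pos : s ⊆ Ioi 0) (σ : ℝ) (a : ℝ → ℝ) (g : ℝ → ℝ≥0∞) :
    LqNorm q s (fun u => ENNReal.ofReal (u ^ (-σ - q⁻¹.toReal) * a u) * g u) =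
      eLpNorm (fun u => ENNReal.ofReal (u ^ (-σ) * a u) * g u) q (logMeasure.restrict s) := by
  rw [← LqNorm_rpow_mul_eq_eLpNorm hq hs hs_pos]
  refine LqNorm_congr hs (fun u hu => ?_) q
  have hu_pos : 0 < u := hs_pos hu
  rw [← mul_assoc, ← ENNReal.ofReal_mul (by positivity), ← mul_assoc, ← Real.rpow_add hu_pos,
    neg_add_eq_sub]

theorem exists_le_mul_eLpNorm_Ico {p : ℝ≥0∞} (hp : p ≠ 0) :
    ∃ D : ℝ≥0, ∀ {x z : ℝ}, 0 < x → 2 * x ≤ z → ∀ {c : ℝ≥0∞} {f : ℝ → ℝ≥0∞},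
      (∀ u ∈ Ico x z, c ≤ f u) → c ≤ D * eLpNorm f p (logMeasure.restrict (Ico x z)) := by
  set κ : ℝ≥0∞ := ENNReal.ofReal (Real.log 2) ^ (1 / p.toReal) with hκ
  have hlog : ENNReal.ofReal (Real.log 2) ≠ 0 :=
    (ENNReal.ofReal_pos.2 (Real.log_pos one_lt_two)).ne'
  have hκ_zero : κ ≠ 0 := by simp [hκ, ENNReal.rpow_eq_zero_iff, hlog]
  have hκ_top : κ ≠ ∞ := ENNReal.rpow_ne_top_of_nonneg (by positivity) ENNReal.ofReal_ne_top
  refine ⟨κ⁻¹.toNNReal, fun {x z} hx hxz c f hf => ?_⟩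
  have hmeas : ENNReal.ofReal (Real.log 2) ≤ logMeasure (Ico x z) := by
    rw [logMeasure_Ico hx (by linarith)]
    gcongr
    exact (le_div_iff₀ hx).2 hxz
  rw [ENNReal.coe_toNNReal (ENNReal.inv_ne_top.2 hκ_zero), ← ENNReal.div_eq_inv_mul,
    ENNReal.le_div_iff_mul_le (.inl hκ_zero) (.inl hκ_top)]
  calc c * κ ≤ c * logMeasure (Ico x z) ^ (1 / p.toReal) :=
        mul_le_mul_right (ENNReal.rpow_le_rpow hmeas (by positivity)) c
    _ ≤ _ := mul_rpow_le_eLpNorm_restrict measurableSet_Ico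
      (hlog.bot_lt.trans_le hmeas).ne' hf hp

theorem exists_eLpNorm_Ico_le_mul (Λ : ℝ) (p : ℝ≥0∞) :
    ∃ D : ℝ≥0, ∀ {x z : ℝ}, 0 < x → x ≤ z → z ≤ Λ * x → ∀ {c : ℝ≥0∞} {f : ℝ → ℝ≥0∞},
      (∀ u ∈ Ico x z, f u ≤ c) → eLpNorm f p (logMeasure.restrict (Ico x z)) ≤ D * c := by
  refine ⟨(ENNReal.ofReal (Real.log Λ) ^ (1 / p.toReal)).toNNReal, fun {x z} hx hxz hz c f hf => ?_⟩
  rw [ENNReal.coe_toNNReal (ENNReal.rpow_ne_top_of_nonneg (by positivity) ENNReal.ofReal_ne_top),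
    mul_comm]
  refine (eLpNorm_restrict_le_of_forall_le measurableSet_Ico hf p).trans ?_
  rw [logMeasure_Ico hx (hx.trans_le hxz)]
  gcongr
  · exact div_pos (hx.trans_le hxz) hx
  · exact (div_le_iff₀ hx).2 hz

end LogMeasure

section RegularlyVarying

theorem ofReal_le_coe_mul_ofReal {C : ℝ≥0} {x y : ℝ} (h : x ≤ C * y) :
    ENNReal.ofReal x ≤ C * ENNReal.ofReal y := by
  rw [← ENNReal.ofReal_coe_nnreal, ← ENNReal.ofReal_mul C.coe_nonneg]
  exact ENNReal.ofReal_le_ofReal h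

/-- `W` is regularly varying of index `α` on `(0, ∞)` in the sense of Potter's bounds: up to a
multiplicative constant, `W t / W s` lies between `(t / s) ^ α` times `max (t / s) (s / t) ^ (± ε)`,
for every `ε > 0`. The bounds are recorded on the logarithmic scale, where products, powers and
compositions of weights become sums, multiples and compositions. -/
structure RegularlyVarying (α : ℝ) (W : ℝ → ℝ) : Prop where
  pos : ∀ t, 0 < t → 0 < W t
  abs_log_sub_le : ∀ ε, 0 < ε → ∃ c, ∀ s t, 0 < s → 0 < t →
    |Real.log (W t) - Real.log (W s) - α * (Real.log t - Real.log s)| ≤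
      c + ε * |Real.log t - Real.log s|

namespace RegularlyVarying

variable {α β : ℝ} {V W ρ : ℝ → ℝ}

theorem congr (hW : RegularlyVarying α W) (h : ∀ t, 0 < t → V t = W t) : RegularlyVarying α V where
  pos t ht := (h t ht).symm ▸ hW.pos t ht
  abs_log_sub_le ε hε := by
    obtain ⟨c, hc⟩ := hW.abs_log_sub_le ε hε
    exact ⟨c, fun s t hs ht => by simpa only [h s hs, h t ht] using hc s t hs ht⟩

theorem rpow_id (α : ℝ) : RegularlyVarying α (· ^ α) where
  pos t ht := Real.rpow_pos_of_pos ht α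
  abs_log_sub_le ε hε := by
    refine ⟨0, fun s t hs ht => ?_⟩
    rw [Real.log_rpow hs, Real.log_rpow ht, ← mul_sub, sub_self, abs_zero]
    positivity

theorem id : RegularlyVarying 1 fun t => t := (rpow_id 1).congr fun t _ => (Real.rpow_one t).symm

theorem mul (hV : RegularlyVarying α V) (hW : RegularlyVarying β W) :
    RegularlyVarying (α + β) fun t => V t * W t where
  pos t ht := mul_pos (hV.pos t ht) (hW.pos t ht)
  abs_log_sub_le ε hε := by
    obtain ⟨c, hc⟩ := hV.abs_log_sub_le (ε / 2) (half_pos hε)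
    obtain ⟨d, hd⟩ := hW.abs_log_sub_le (ε / 2) (half_pos hε)
    refine ⟨c + d, fun s t hs ht => ?_⟩
    rw [Real.log_mul (hV.pos t ht).ne' (hW.pos t ht).ne',
      Real.log_mul (hV.pos s hs).ne' (hW.pos s hs).ne']
    have hcst := abs_le.1 (hc s t hs ht)
    have hdst := abs_le.1 (hd s t hs ht)
    exact abs_le.2 ⟨by linarith, by linarith⟩

theorem comp (hW : RegularlyVarying β W) (hρ : RegularlyVarying α ρ) :
    RegularlyVarying (β * α) fun t => W (ρ t) where
  pos t ht := hW.pos _ (hρ.pos t ht)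
  abs_log_sub_le ε hε := by
    set ε₁ := ε / (2 * (|α| + 1)) with hε₁
    set ε₂ := ε / (2 * (|β| + ε₁)) with hε₂
    have hε₁_pos : 0 < ε₁ := by positivity
    have hε₁_le : ε₁ * |α| ≤ ε / 2 := by
      rw [hε₁, div_mul_eq_mul_div, div_le_div_iff₀ (by positivity) two_pos]
      nlinarith [abs_nonneg α]
    have hε₂_eq : (|β| + ε₁) * ε₂ = ε / 2 := by
      rw [hε₂]
      field_simp
    obtain ⟨c, hc⟩ := hW.abs_log_sub_le ε₁ hε₁_pos
    obtain ⟨d, hd⟩ := hρ.abs_log_sub_le ε₂ (by positivity)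
    refine ⟨c + (|β| + ε₁) * d, fun s t hs ht => ?_⟩
    set x := Real.log t - Real.log s
    set y := Real.log (ρ t) - Real.log (ρ s)
    set z := Real.log (W (ρ t)) - Real.log (W (ρ s))
    have hyx : |y - α * x| ≤ d + ε₂ * |x| := hd s t hs ht
    have hy : |y| ≤ |y - α * x| + |α| * |x| := by
      simpa [abs_mul] using abs_add_le (y - α * x) (α * x)
    calc |z - β * α * x| = |(z - β * y) + β * (y - α * x)| := by ring_nf
      _ ≤ |z - β * y| + |β| * |y - α * x| := (abs_add_le _ _).trans_eq (by rw [abs_mul])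
      _ ≤ c + ε₁ * |y| + |β| * |y - α * x| := by
        gcongr
        exact hc _ _ (hρ.pos s hs) (hρ.pos t ht)
      _ ≤ c + ε₁ * (|y - α * x| + |α| * |x|) + |β| * |y - α * x| := by gcongr
      _ = c + ε₁ * |α| * |x| + (|β| + ε₁) * |y - α * x| := by ring
      _ ≤ c + ε / 2 * |x| + (|β| + ε₁) * (d + ε₂ * |x|) := by gcongr
      _ = c + (|β| + ε₁) * d + ε * |x| := by rw [mul_add, ← mul_assoc, hε₂_eq]; ring

theorem rpow (hW : RegularlyVarying α W) (e : ℝ) :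
    RegularlyVarying (e * α) fun t => W t ^ e :=
  (rpow_id e).comp hW

theorem inv (hW : RegularlyVarying α W) : RegularlyVarying (-α) fun t => (W t)⁻¹ := by
  simpa only [neg_one_mul] using (hW.rpow (-1)).congr fun t _ => (Real.rpow_neg_one _).symm

theorem div (hV : RegularlyVarying α V) (hW : RegularlyVarying β W) :
    RegularlyVarying (α - β) fun t => V t / W t :=
  hV.mul hW.inv

theorem of_le_mul_exp (hpos : ∀ t, 0 < t → 0 < W t)
    (h : ∀ ε, 0 < ε → ∃ C, ∀ s t, 0 < s → 0 < t →
      W t ≤ C * Real.exp (ε * |Real.log t - Real.log s|) * W s) :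
    RegularlyVarying 0 W where
  pos := hpos
  abs_log_sub_le ε hε := by
    obtain ⟨C, hC⟩ := h ε hε
    have hC_pos : 0 < C := by
      have h1 := hC 1 1 one_pos one_pos
      have hW1 := hpos 1 one_pos
      simp only [sub_self, abs_zero, mul_zero, Real.exp_zero, mul_one] at h1
      exact pos_of_mul_pos_left (hW1.trans_le h1) hW1.le
    have hlog (s t : ℝ) (hs : 0 < s) (ht : 0 < t) :
        Real.log (W t) ≤ Real.log C + ε * |Real.log t - Real.log s| + Real.log (W s) := by
      rw [← Real.log_exp (ε * _), ← Real.log_mul hC_pos.ne' (Real.exp_pos _).ne',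
        ← Real.log_mul (by positivity) (hpos s hs).ne']
      exact Real.log_le_log (hpos t ht) (hC s t hs ht)
    refine ⟨Real.log C, fun s t hs ht => ?_⟩
    have hst := hlog s t hs ht
    have hts := hlog t s ht hs
    rw [abs_sub_comm] at hts
    rw [zero_mul, sub_zero, abs_le]
    exact ⟨by linarith, by linarith⟩

theorem exists_le_mul_exp (hW : RegularlyVarying 0 W) {ε : ℝ} (hε : 0 < ε) :
    ∃ C : ℝ≥0, ∀ {s t}, 0 < s → 0 < t →
      W t ≤ C * Real.exp (ε * |Real.log t - Real.log s|) * W s := by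
  obtain ⟨c, hc⟩ := hW.abs_log_sub_le ε hε
  refine ⟨(Real.exp c).toNNReal, fun {s t} hs ht => ?_⟩
  have h := (abs_le.1 (hc s t hs ht)).2
  rw [Real.coe_toNNReal _ (Real.exp_pos c).le, ← Real.exp_add,
    ← Real.log_le_log_iff (hW.pos t ht) (mul_pos (Real.exp_pos _) (hW.pos s hs)),
    Real.log_mul (Real.exp_pos _).ne' (hW.pos s hs).ne', Real.log_exp]
  linarith

theorem exists_le_mul_rpow (hW : RegularlyVarying α W) (hαβ : α < β) :
    ∃ C : ℝ≥0, ∀ {s t}, 0 < s → s ≤ t → W t ≤ C * (t / s) ^ β * W s := by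
  obtain ⟨c, hc⟩ := hW.abs_log_sub_le (β - α) (sub_pos.2 hαβ)
  refine ⟨(Real.exp c).toNNReal, fun {s t} hs hst => ?_⟩
  have ht : 0 < t := hs.trans_le hst
  have h := (abs_le.1 (hc s t hs ht)).2
  rw [abs_of_nonneg (sub_nonneg.2 (Real.log_le_log hs hst))] at h
  rw [Real.coe_toNNReal _ (Real.exp_pos c).le, Real.rpow_def_of_pos (div_pos ht hs),
    ← Real.exp_add, ← Real.log_le_log_iff (hW.pos t ht) (mul_pos (Real.exp_pos _) (hW.pos s hs)),
    Real.log_mul (Real.exp_pos _).ne' (hW.pos s hs).ne', Real.log_exp,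
    Real.log_div ht.ne' hs.ne']
  linarith

theorem exists_le_mul_rpow_neg (hW : RegularlyVarying α W) (hβα : β < α) :
    ∃ C : ℝ≥0, ∀ {s t}, 0 < s → s ≤ t → W s ≤ C * (t / s) ^ (-β) * W t := by
  obtain ⟨C, hC⟩ := hW.inv.exists_le_mul_rpow (neg_lt_neg hβα)
  refine ⟨C, fun {s t} hs hst => ?_⟩
  have h := hC hs hst
  rwa [inv_le_iff_one_le_mul₀ (hW.pos t (hs.trans_le hst)), ← div_eq_mul_inv, div_mul_eq_mul_div,
    one_le_div (hW.pos s hs)] at h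

theorem exists_le_mul_of_le_mul (hW : RegularlyVarying α W) (Λ : ℝ) :
    ∃ C : ℝ≥0, ∀ {s t}, 0 < s → s ≤ t → t ≤ Λ * s → W t ≤ C * W s ∧ W s ≤ C * W t := by
  obtain ⟨C, hC⟩ := hW.exists_le_mul_rpow ((le_abs_self α).trans_lt (lt_add_one _))
  obtain ⟨C', hC'⟩ := hW.exists_le_mul_rpow_neg
    ((sub_one_lt _).trans_le (neg_abs_le α))
  refine ⟨max C C' * (Λ ^ (|α| + 1)).toNNReal, fun {s t} hs hst htΛ => ?_⟩
  have ht : 0 < t := hs.trans_le hst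
  have hΛ : t / s ≤ Λ := (div_le_iff₀ hs).2 htΛ
  have hexp : -(-|α| - 1) = |α| + 1 := by ring
  have hpow : (t / s) ^ (|α| + 1) ≤ Λ ^ (|α| + 1) := by gcongr
  rw [NNReal.coe_mul, Real.coe_toNNReal _ ((by positivity : 0 ≤ (t / s) ^ (|α| + 1)).trans hpow),
    NNReal.coe_max]
  have hWs := (hW.pos s hs).le
  have hWt := (hW.pos t ht).le
  constructor
  · refine (hC hs hst).trans ?_
    gcongr
    exact le_max_left _ _
  · refine (hC' hs hst).trans ?_
    rw [hexp]
    gcongr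
    exact le_max_right _ _

end RegularlyVarying

end RegularlyVarying

section SlowlyVarying

theorem EquivOn.exists_le_mul {s : Set ℝ} {f g : ℝ → ℝ} (h : EquivOn s f g) :
    ∃ C, ∀ x ∈ s, ∀ y ∈ s, g x ≤ g y → f x ≤ C * f y := by
  obtain ⟨C, hC, h⟩ := h
  refine ⟨C * C, fun x hx y hy hxy => ?_⟩
  calc f x ≤ C * g x := (h x hx).2
    _ ≤ C * (C * f y) := by
      gcongr
      exact hxy.trans ((inv_mul_le_iff₀ hC).1 (h y hy).1)
    _ = C * C * f y := (mul_assoc _ _ _).symm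

theorem SlowlyVarying.regularlyVarying {b : ℝ → ℝ} (hb : SlowlyVarying b) :
    RegularlyVarying 0 b := by
  obtain ⟨-, hpos, hb⟩ := hb
  refine .of_le_mul_exp hpos fun ε hε => ?_
  obtain ⟨⟨g₁, hg₁, hbg₁⟩, g₂, hg₂, hbg₂⟩ := hb ε hε
  obtain ⟨C₁, hC₁⟩ := hbg₁.exists_le_mul
  obtain ⟨C₂, hC₂⟩ := hbg₂.exists_le_mul
  have hdiv {s t : ℝ} (hs : 0 < s) (ht : 0 < t) (hst : s ≤ t) :
      Real.exp (ε * |Real.log t - Real.log s|) = (t / s) ^ ε := by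
    rw [abs_of_nonneg (sub_nonneg.2 (Real.log_le_log hs hst)), ← Real.log_div ht.ne' hs.ne',
      mul_comm, Real.rpow_def_of_pos (div_pos ht hs)]
  refine ⟨max C₁ C₂, fun s t hs ht => ?_⟩
  have hbs : 0 ≤ b s := (hpos s hs).le
  rcases le_total s t with hst | hts
  · rw [hdiv hs ht hst, Real.div_rpow ht.le hs.le]
    have h := hC₂ t ht s hs (hg₂ hs ht hst)
    simp only [Real.rpow_neg ht.le, Real.rpow_neg hs.le] at h
    calc b t = t ^ ε * ((t ^ ε)⁻¹ * b t) := (mul_inv_cancel_left₀ (by positivity) _).symm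
      _ ≤ t ^ ε * (C₂ * ((s ^ ε)⁻¹ * b s)) := by gcongr
      _ = C₂ * (t ^ ε / s ^ ε) * b s := by ring
      _ ≤ _ := by gcongr; exact le_max_right _ _
  · rw [abs_sub_comm, hdiv ht hs hts, Real.div_rpow hs.le ht.le]
    have h := hC₁ t ht s hs (hg₁ ht hs hts)
    calc b t = (t ^ ε)⁻¹ * (t ^ ε * b t) := (inv_mul_cancel_left₀ (by positivity) _).symm
      _ ≤ (t ^ ε)⁻¹ * (C₁ * (s ^ ε * b s)) := by gcongr
      _ = C₁ * (s ^ ε / t ^ ε) * b s := by ring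
      _ ≤ _ := by gcongr; exact le_max_left _ _

end SlowlyVarying

section TailNorm

variable {r : ℝ≥0∞} {w : ℝ → ℝ}

/-- The tail `‖s ^ (-1 / r) w s‖_{r, (t, ∞)}` of a weight, as a function of `t`. -/
def tailNorm (r : ℝ≥0∞) (w : ℝ → ℝ) (t : ℝ) : ℝ≥0∞ :=
  eLpNorm (fun u => ENNReal.ofReal (w u)) r (logMeasure.restrict (Ioi t))

theorem LqNorm_svWgt_Ioi_eq_tailNorm (hr : r ≠ 0) (w : ℝ → ℝ) {t : ℝ} (ht : 0 ≤ t) :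
    LqNorm r (Ioi t) (svWgt r w) = tailNorm r w t := by
  rw [tailNorm, ← LqNorm_rpow_mul_eq_eLpNorm hr measurableSet_Ioi (Ioi_subset_Ioi ht)]
  exact LqNorm_congr measurableSet_Ioi
    (fun u hu => ENNReal.ofReal_mul (Real.rpow_nonneg (ht.trans_lt hu).le _)) r

theorem exists_tailNorm_le_mul_exp (hw : RegularlyVarying 0 w) (r : ℝ≥0∞) {ε : ℝ} (hε : 0 < ε) :
    ∃ C : ℝ≥0, ∀ s t, 0 < s → 0 < t → tailNorm r w t ≤
      (C * Real.exp (ε * |Real.log t - Real.log s|)).toNNReal * tailNorm r w s := by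
  obtain ⟨C, hC⟩ := hw.exists_le_mul_exp hε
  refine ⟨C, fun s t hs ht => ?_⟩
  have hts : 0 < t / s := div_pos ht hs
  have hdil := eLpNorm_Ioi_mul_logMeasure hts s (fun u => ENNReal.ofReal (w u)) r
  rw [div_mul_cancel₀ t hs.ne'] at hdil
  rw [tailNorm, hdil]
  refine eLpNorm_le_coe_mul (ae_restrict_of_ae ?_) r
  filter_upwards [ae_logMeasure_pos] with u hu
  have hlog : Real.log (t / s * u) - Real.log u = Real.log t - Real.log s := by
    rw [Real.log_mul hts.ne' hu.ne', Real.log_div ht.ne' hs.ne', add_sub_cancel_right]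
  have h := hC hu (mul_pos hts hu)
  rw [hlog] at h
  exact (ENNReal.ofReal_le_ofReal h).trans_eq (ENNReal.ofReal_mul (by positivity))

theorem tailNorm_ne_top (hw : RegularlyVarying 0 w) (hfin : tailNorm r w 1 ≠ ∞) {t : ℝ}
    (ht : 0 < t) : tailNorm r w t ≠ ∞ := by
  obtain ⟨C, hC⟩ := exists_tailNorm_le_mul_exp hw r one_pos
  exact ne_top_of_le_ne_top (ENNReal.mul_ne_top coe_ne_top hfin) (hC 1 t one_pos ht)

theorem tailNorm_ne_zero (hw : RegularlyVarying 0 w) (hr : r ≠ 0) {t : ℝ} (ht : 0 < t) :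
    tailNorm r w t ≠ 0 := by
  intro hzero
  obtain ⟨C, hC⟩ := hw.exists_le_mul_of_le_mul 2
  obtain ⟨D, hD⟩ := exists_le_mul_eLpNorm_Ico hr
  have ht2 : 0 < 2 * t := by positivity
  have hblock : Ico (2 * t) (2 * (2 * t)) ⊆ Ioi t := fun u hu =>
    (by linarith : t < 2 * t).trans_le hu.1
  have hnull : eLpNorm (fun u => C * ENNReal.ofReal (w u)) r
      (logMeasure.restrict (Ico (2 * t) (2 * (2 * t)))) = 0 := by
    refine le_antisymm ?_ zero_le
    calc _ ≤ C * eLpNorm (fun u => ENNReal.ofReal (w u)) r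
            (logMeasure.restrict (Ico (2 * t) (2 * (2 * t)))) :=
          eLpNorm_le_coe_mul (ae_of_all _ fun _ => le_rfl) r
      _ ≤ C * tailNorm r w t := by
          gcongr
          exact eLpNorm_mono_measure _ (Measure.restrict_mono_set _ hblock)
      _ = 0 := by rw [hzero, mul_zero]
  have hle := hD ht2 le_rfl (c := ENNReal.ofReal (w (2 * t)))
    fun u hu => ofReal_le_coe_mul_ofReal (hC ht2 hu.1 hu.2.le).2
  rw [hnull, mul_zero] at hle
  exact (ENNReal.ofReal_pos.2 (hw.pos _ ht2)).not_ge hle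

theorem RegularlyVarying.toReal_tailNorm (hw : RegularlyVarying 0 w) (hr : r ≠ 0)
    (hfin : tailNorm r w 1 ≠ ∞) : RegularlyVarying 0 fun t => (tailNorm r w t).toReal := by
  refine .of_le_mul_exp
    (fun t ht => ENNReal.toReal_pos (tailNorm_ne_zero hw hr ht) (tailNorm_ne_top hw hfin ht))
    fun ε hε => ?_
  obtain ⟨C, hC⟩ := exists_tailNorm_le_mul_exp hw r hε
  refine ⟨C, fun s t hs ht => ?_⟩
  have h := ENNReal.toReal_mono (ENNReal.mul_ne_top coe_ne_top (tailNorm_ne_top hw hfin hs))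
    (hC s t hs ht)
  rwa [ENNReal.toReal_mul, ENNReal.coe_toReal, Real.coe_toNNReal _ (by positivity)] at h

end TailNorm

section Discretization

/-- The norm `‖W(u) K(u, f)‖` in `L^q(du / u)` with a general weight `W`. The spaces `Ā_{θ,q;b}` are
those with `W u = u ^ (-θ) * b u`. -/
def interpNorm {G : Type*} [AddCommGroup G] (N₀ N₁ : G → ℝ≥0∞) (q : ℝ≥0∞) (W : ℝ → ℝ) (f : G) :
    ℝ≥0∞ :=
  eLpNorm (fun u => ENNReal.ofReal (W u) * Kf N₀ N₁ u f) q logMeasure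

/-- The nodes of a discretization of `(0, ∞)`: consecutive ratios lie between `2` and `Λ`. -/
structure IsDiscretizing (Λ : ℝ) (t : ℤ → ℝ) : Prop where
  pos : ∀ k, 0 < t k
  two_mul_le : ∀ k, 2 * t k ≤ t (k + 1)
  le_mul : ∀ k, t (k + 1) ≤ Λ * t k

namespace IsDiscretizing

variable {Λ : ℝ} {t : ℤ → ℝ}

theorem zpow {l : ℝ} (hl : 2 ≤ l) : IsDiscretizing l (l ^ · : ℤ → ℝ) := by
  have hl_pos : 0 < l := two_pos.trans_le hl
  have hsucc (k : ℤ) : l ^ (k + 1) = l * l ^ k := by rw [zpow_add_one₀ hl_pos.ne', mul_comm]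
  exact ⟨fun k => zpow_pos hl_pos k, fun k => by rw [hsucc]; gcongr, fun k => (hsucc k).le⟩

variable (ht : IsDiscretizing Λ t)
include ht

theorem le_succ (k : ℤ) : t k ≤ t (k + 1) := by linarith [ht.pos k, ht.two_mul_le k]

theorem monotone : Monotone t := monotone_int_of_le_succ ht.le_succ

theorem two_pow_mul_le (k : ℤ) (n : ℕ) : 2 ^ n * t k ≤ t (k + n) := by
  induction n with
  | zero => simp
  | succ n ih =>
    calc 2 ^ (n + 1) * t k = 2 * (2 ^ n * t k) := by ring
      _ ≤ 2 * t (k + n) := by gcongr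
      _ ≤ t (k + n + 1) := ht.two_mul_le _
      _ = t (k + (n + 1 : ℕ)) := by push_cast; rw [add_assoc]

theorem iUnion_Ico : ⋃ k, Ico (t k) (t (k + 1)) = Ioi 0 := by
  refine subset_antisymm (iUnion_subset fun k x hx => (ht.pos k).trans_le hx.1) fun x hx => ?_
  have hbdd : ∃ n : ℤ, ∀ k, t k ≤ x → k ≤ n := by
    obtain ⟨n, hn⟩ := pow_unbounded_of_one_lt (x / t 0) one_lt_two
    rw [div_lt_iff₀ (ht.pos 0)] at hn
    refine ⟨n, fun k hk => le_of_lt (ht.monotone.reflect_lt (hk.trans_lt ?_))⟩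
    simpa using hn.trans_le (ht.two_pow_mul_le 0 n)
  have hne : ∃ k, t k ≤ x := by
    obtain ⟨n, hn⟩ := pow_unbounded_of_one_lt (t 0 / x) one_lt_two
    refine ⟨-n, le_of_mul_le_mul_left ?_ (by positivity : (0 : ℝ) < 2 ^ n)⟩
    have h := ht.two_pow_mul_le (-n) n
    rw [neg_add_cancel] at h
    exact h.trans ((div_lt_iff₀ hx).1 hn).le
  obtain ⟨k, hk, hmax⟩ := Int.exists_greatest_of_bdd hbdd hne
  exact mem_iUnion.2 ⟨k, hk, lt_of_not_ge fun h => by linarith [hmax (k + 1) h]⟩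

theorem eLpNorm_logMeasure {q : ℝ≥0∞} (hq : q ≠ 0) (F : ℝ → ℝ≥0∞) :
    eLpNorm F q logMeasure =
      eLpNorm (fun k => eLpNorm F q (logMeasure.restrict (Ico (t k) (t (k + 1))))) q
        Measure.count := by
  have hd : Pairwise (Function.onFun Disjoint fun k => Ico (t k) (t (k + 1))) :=
    ht.monotone.pairwise_disjoint_on_Ico_succ
  rw [← eLpNorm_restrict_iUnion (fun _ => measurableSet_Ico) hd F hq, ht.iUnion_Ico,
    logMeasure_restrict_Ioi_zero]

end IsDiscretizing

variable {G : Type*} [AddCommGroup G] {N₀ N₁ : G → ℝ≥0∞} {α : ℝ} {W : ℝ → ℝ}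

theorem normK_eq_interpNorm {q : ℝ≥0∞} (hq : q ≠ 0) (θ : ℝ) (b : ℝ → ℝ) :
    normK N₀ N₁ θ q b = interpNorm N₀ N₁ q fun u => u ^ (-θ) * b u := by
  ext f
  rw [normK, LqNorm_rpow_sub_mul_eq_eLpNorm hq measurableSet_Ioi subset_rfl,
    logMeasure_restrict_Ioi_zero, interpNorm]

theorem interpNorm_congr {V : ℝ → ℝ} (h : ∀ t, 0 < t → V t = W t) (q : ℝ≥0∞) :
    interpNorm N₀ N₁ q V = interpNorm N₀ N₁ q W := by
  ext f
  refine eLpNorm_congr_ae ?_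
  filter_upwards [ae_logMeasure_pos] with u hu
  rw [h u hu]

theorem RegularlyVarying.exists_mul_Kf_le (hW : RegularlyVarying α W) (N₀ N₁ : G → ℝ≥0∞) (Λ : ℝ) :
    ∃ C : ℝ≥0, ∀ {s u}, 0 < s → s ≤ u → u ≤ Λ * s → ∀ f,
      ENNReal.ofReal (W u) * Kf N₀ N₁ u f ≤ C * (ENNReal.ofReal (W s) * Kf N₀ N₁ s f) ∧
      ENNReal.ofReal (W s) * Kf N₀ N₁ s f ≤ C * (ENNReal.ofReal (W u) * Kf N₀ N₁ u f) := by
  obtain ⟨C, hC⟩ := hW.exists_le_mul_of_le_mul Λ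
  refine ⟨C * (max 1 Λ).toNNReal, fun {s u} hs hsu huΛ f => ?_⟩
  have hΛ : u / s ≤ Λ := (div_le_iff₀ hs).2 huΛ
  have hone : (1 : ℝ≥0∞) ≤ (max 1 Λ).toNNReal := by simp
  have hmul (x y : ℝ≥0∞) : (C * (max 1 Λ).toNNReal : ℝ≥0) * (x * y) =
      C * x * ((max 1 Λ).toNNReal * y) := by rw [ENNReal.coe_mul, mul_mul_mul_comm]
  obtain ⟨hWu, hWs⟩ := hC hs hsu huΛ
  rw [hmul, hmul]
  refine ⟨mul_le_mul' (ofReal_le_coe_mul_ofReal hWu) ((Kf_le_max_mul hs u f).trans ?_),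
    mul_le_mul' (ofReal_le_coe_mul_ofReal hWs)
      ((Kf_mono hs hsu f).trans (le_mul_of_one_le_left' hone))⟩
  exact mul_le_mul_left (ENNReal.ofReal_le_ofReal (max_le_max_left 1 hΛ)) _

variable {Λ : ℝ} {t : ℤ → ℝ} {q : ℝ≥0∞}

theorem interpNorm_dominated_eLpNorm_count (hW : RegularlyVarying α W) (ht : IsDiscretizing Λ t)
    (hq : q ≠ 0) :
    interpNorm N₀ N₁ q W ≲ fun f =>
      eLpNorm (fun k => ENNReal.ofReal (W (t k)) * Kf N₀ N₁ (t k) f) q Measure.count := by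
  obtain ⟨C, hC⟩ := hW.exists_mul_Kf_le N₀ N₁ Λ
  obtain ⟨D, hD⟩ := exists_eLpNorm_Ico_le_mul Λ q
  refine ⟨D * C, fun f => ?_⟩
  rw [interpNorm, ht.eLpNorm_logMeasure hq]
  refine eLpNorm_le_coe_mul (ae_of_all _ fun k => ?_) q
  rw [ENNReal.coe_mul, mul_assoc]
  exact hD (ht.pos k) (ht.le_succ k) (ht.le_mul k) fun u hu =>
    (hC (ht.pos k) hu.1 (hu.2.le.trans (ht.le_mul k)) f).1

theorem eLpNorm_count_dominated_interpNorm (hW : RegularlyVarying α W) (ht : IsDiscretizing Λ t)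
    (hq : q ≠ 0) :
    (fun f => eLpNorm (fun k => ENNReal.ofReal (W (t k)) * Kf N₀ N₁ (t k) f) q Measure.count) ≲
      interpNorm N₀ N₁ q W := by
  obtain ⟨C, hC⟩ := hW.exists_mul_Kf_le N₀ N₁ Λ
  obtain ⟨D, hD⟩ := exists_le_mul_eLpNorm_Ico hq
  refine ⟨D * C, fun f => ?_⟩
  rw [interpNorm, ht.eLpNorm_logMeasure hq]
  refine eLpNorm_le_coe_mul (ae_of_all _ fun k => ?_) q
  refine (hD (ht.pos k) (ht.two_mul_le k) fun u hu =>
    (hC (ht.pos k) hu.1 (hu.2.le.trans (ht.le_mul k)) f).2).trans ?_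
  rw [ENNReal.coe_mul, mul_assoc]
  gcongr
  exact eLpNorm_le_coe_mul (ae_of_all _ fun _ => le_rfl) q

end Discretization

section LSpace

variable {G : Type*} [AddCommGroup G] {N₀ N₁ : G → ℝ≥0∞}

/-- The space with quasi-norm `L` lies between the interpolation spaces with weight `v` and
exponents `p` and `∞`. This is all that reiteration needs to know about it. -/
structure OfClass (N₀ N₁ : G → ℝ≥0∞) (p : ℝ≥0∞) (v : ℝ → ℝ) (L : G → ℝ≥0∞) : Prop where
  exists_mul_Kf_le : ∃ C : ℝ≥0, ∀ t, 0 < t → ∀ f, ENNReal.ofReal (v t) * Kf N₀ N₁ t f ≤ C * L f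
  dominated_interpNorm : L ≲ interpNorm N₀ N₁ p v

/-- The 𝓛-type norm `‖w(t) ‖A(u) K(u, f)‖_{q, (0, t)}‖_r` over `du / u` and `dt / t`, with general
weights. The spaces `Ā^𝓛_{σ,r,b,q,a}` are those with `A u = u ^ (-σ) * a u` and `w = b / a`. -/
def initialNorm (N₀ N₁ : G → ℝ≥0∞) (r q : ℝ≥0∞) (w A : ℝ → ℝ) (f : G) : ℝ≥0∞ :=
  eLpNorm (fun t => ENNReal.ofReal (w t) * eLpNorm (fun u => ENNReal.ofReal (A u) * Kf N₀ N₁ u f) q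
    (logMeasure.restrict (Ioo 0 t))) r logMeasure

variable {α : ℝ} {p q r : ℝ≥0∞} {A w : ℝ → ℝ}

theorem normL_eq_initialNorm (hr : r ≠ 0) (hq : q ≠ 0) (σ : ℝ) (b a : ℝ → ℝ) :
    normL N₀ N₁ σ r q b a = initialNorm N₀ N₁ r q (fun t => b t / a t) fun u => u ^ (-σ) * a u := by
  ext f
  have hinner (t : ℝ) := LqNorm_rpow_sub_mul_eq_eLpNorm hq (measurableSet_Ioo (a := 0) (b := t))
    Ioo_subset_Ioi_self σ a fun u => Kf N₀ N₁ u f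
  have houter := LqNorm_rpow_sub_mul_eq_eLpNorm hr measurableSet_Ioi subset_rfl 0
    fun t => b t / a t
  simp only [neg_zero, zero_sub, Real.rpow_zero, one_mul] at houter
  simp only [normL, initialNorm, hinner, houter, logMeasure_restrict_Ioi_zero]

theorem exists_mul_Kf_le_eLpNorm_Ioo (hA : RegularlyVarying α A) (hq : q ≠ 0) (N₀ N₁ : G → ℝ≥0∞) :
    ∃ C : ℝ≥0, ∀ {s t}, 0 < s → s ≤ t → ∀ f, ENNReal.ofReal (A s) * Kf N₀ N₁ s f ≤
      C * eLpNorm (fun u => ENNReal.ofReal (A u) * Kf N₀ N₁ u f) q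
        (logMeasure.restrict (Ioo 0 t)) := by
  obtain ⟨C, hC⟩ := hA.exists_mul_Kf_le N₀ N₁ 2
  obtain ⟨D, hD⟩ := exists_le_mul_eLpNorm_Ico hq
  refine ⟨D * C, fun {s t} hs hst f => ?_⟩
  have hsub : Ico (s / 2) s ⊆ Ioo 0 t := fun u hu =>
    ⟨(half_pos hs).trans_le hu.1, hu.2.trans_le hst⟩
  refine (hD (half_pos hs) (mul_div_cancel₀ s two_ne_zero).le fun u hu =>
    (hC ((half_pos hs).trans_le hu.1) hu.2.le (by linarith [hu.1]) f).1).trans ?_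
  rw [ENNReal.coe_mul, mul_assoc]
  gcongr
  refine (eLpNorm_le_coe_mul (ae_of_all _ fun _ => le_rfl) q).trans ?_
  gcongr

theorem exists_eLpNorm_Ioo_le {Λ : ℝ} {t : ℤ → ℝ} (ht : IsDiscretizing Λ t)
    (hA : RegularlyVarying α A) (hp : p ≠ 0) (hp' : p ≠ ∞) (hpq : p ≤ q) (N₀ N₁ : G → ℝ≥0∞) :
    ∃ C : ℝ≥0, ∀ x f,
      eLpNorm (fun u => ENNReal.ofReal (A u) * Kf N₀ N₁ u f) q (logMeasure.restrict (Ioo 0 x)) ≤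
        C * eLpNorm (fun k => (Ioi (t k)).indicator
          (fun _ => ENNReal.ofReal (A (t k)) * Kf N₀ N₁ (t k) f) x) p Measure.count := by
  obtain ⟨C, hC⟩ := hA.exists_mul_Kf_le N₀ N₁ Λ
  obtain ⟨D, hD⟩ := exists_eLpNorm_Ico_le_mul Λ q
  refine ⟨D * C, fun x f => ?_⟩
  have hq : q ≠ 0 := (hp.bot_lt.trans_le hpq).ne'
  rw [← eLpNorm_indicator_eq_eLpNorm_restrict measurableSet_Ioo, ht.eLpNorm_logMeasure hq]
  refine (eLpNorm_le_coe_mul (ae_of_all _ fun k => ?_) q).trans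
    (mul_le_mul_right (eLpNorm_count_anti hp hp' hpq _) _)
  rw [ENNReal.coe_mul, mul_assoc]
  refine hD (ht.pos k) (ht.le_succ k) (ht.le_mul k) fun u hu => ?_
  by_cases hux : u ∈ Ioo 0 x
  · rw [indicator_of_mem hux, indicator_of_mem (show x ∈ Ioi (t k) from hu.1.trans_lt hux.2)]
    exact (hC (ht.pos k) hu.1 (hu.2.le.trans (ht.le_mul k)) f).1
  · rw [indicator_of_notMem hux]
    exact zero_le

theorem eLpNorm_indicator_Ioi_const_mul (hw_meas : AEMeasurable w logMeasure) (t : ℝ)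
    (c r : ℝ≥0∞) :
    eLpNorm ((Ioi t).indicator fun x => c * ENNReal.ofReal (w x)) r logMeasure =
      c * tailNorm r w t := by
  rw [eLpNorm_indicator_eq_eLpNorm_restrict measurableSet_Ioi,
    eLpNorm_ennreal_const_mul hw_meas.ennreal_ofReal.restrict, tailNorm]

theorem ofReal_mul_toReal_tailNorm (hA : RegularlyVarying α A) (hw : RegularlyVarying 0 w)
    (hfin : tailNorm r w 1 ≠ ∞) {t : ℝ} (ht : 0 < t) (y : ℝ≥0∞) :
    ENNReal.ofReal (A t * (tailNorm r w t).toReal) * y =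
      ENNReal.ofReal (A t) * y * tailNorm r w t := by
  rw [ENNReal.ofReal_mul (hA.pos t ht).le, ENNReal.ofReal_toReal (tailNorm_ne_top hw hfin ht),
    mul_right_comm]

theorem exists_mul_Kf_le_initialNorm (hA : RegularlyVarying α A) (hw : RegularlyVarying 0 w)
    (hw_meas : AEMeasurable w logMeasure) (hfin : tailNorm r w 1 ≠ ∞) (hq : q ≠ 0)
    (N₀ N₁ : G → ℝ≥0∞) :
    ∃ C : ℝ≥0, ∀ t, 0 < t → ∀ f, ENNReal.ofReal (A t * (tailNorm r w t).toReal) * Kf N₀ N₁ t f ≤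
      C * initialNorm N₀ N₁ r q w A f := by
  obtain ⟨C, hC⟩ := exists_mul_Kf_le_eLpNorm_Ioo hA hq N₀ N₁
  refine ⟨C, fun t ht f => ?_⟩
  rw [ofReal_mul_toReal_tailNorm hA hw hfin ht, ← eLpNorm_indicator_Ioi_const_mul hw_meas]
  refine eLpNorm_le_coe_mul (ae_of_all _ fun x => ?_) r
  by_cases hx : x ∈ Ioi t
  · rw [indicator_of_mem hx, mul_comm, mul_left_comm (C : ℝ≥0∞)]
    exact mul_le_mul_right (hC ht (le_of_lt hx) f) _
  · rw [indicator_of_notMem hx]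
    exact zero_le

theorem initialNorm_dominated (hA : RegularlyVarying α A) (hw : RegularlyVarying 0 w)
    (hw_meas : AEMeasurable w logMeasure) (hfin : tailNorm r w 1 ≠ ∞) (hp : p ≠ 0) (hp' : p ≠ ∞)
    (hpq : p ≤ q) (hpr : p ≤ r) :
    initialNorm N₀ N₁ r q w A ≲ interpNorm N₀ N₁ p fun t => A t * (tailNorm r w t).toReal := by
  have hr : r ≠ 0 := (hp.bot_lt.trans_le hpr).ne'
  have ht := IsDiscretizing.zpow (le_refl (2 : ℝ))
  set t : ℤ → ℝ := fun k => 2 ^ k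
  refine .trans ?_ (eLpNorm_count_dominated_interpNorm (hA.mul (hw.toReal_tailNorm hr hfin)) ht hp)
  obtain ⟨C, hC⟩ := exists_eLpNorm_Ioo_le ht hA hp hp' hpq N₀ N₁
  refine ⟨C, fun f => ?_⟩
  set y : ℤ → ℝ≥0∞ := fun k => ENNReal.ofReal (A (t k)) * Kf N₀ N₁ (t k) f with hy
  have hpull (x : ℝ) : ENNReal.ofReal (w x) *
      eLpNorm (fun k => (Ioi (t k)).indicator (fun _ => y k) x) p Measure.count =
      eLpNorm (fun k => (Ioi (t k)).indicator (fun u => y k * ENNReal.ofReal (w u)) x) p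
        Measure.count := by
    rw [← eLpNorm_ennreal_const_mul Measurable.of_discrete.aemeasurable]
    congr 1 with k
    by_cases hk : x ∈ Ioi (t k)
    · simp only [indicator_of_mem hk, mul_comm]
    · simp only [indicator_of_notMem hk, mul_zero]
  calc initialNorm N₀ N₁ r q w A f
      ≤ C * eLpNorm (fun x => eLpNorm (fun k =>
          (Ioi (t k)).indicator (fun u => y k * ENNReal.ofReal (w u)) x) p Measure.count) r
          logMeasure := by
        refine eLpNorm_le_coe_mul (ae_of_all _ fun x => ?_) r
        rw [← hpull, mul_left_comm]
        exact mul_le_mul_right (hC x f) _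
    _ ≤ C * eLpNorm (fun k => y k * tailNorm r w (t k)) p Measure.count := by
        simp only [← eLpNorm_indicator_Ioi_const_mul hw_meas]
        refine mul_le_mul_right (eLpNorm_eLpNorm_count_le (fun k => ?_) hp hp' hpr) _
        exact (hw_meas.ennreal_ofReal.const_mul _).indicator measurableSet_Ioi
    _ = _ := by simp only [ofReal_mul_toReal_tailNorm hA hw hfin (ht.pos _), hy]

theorem ofClass_initialNorm (hA : RegularlyVarying α A) (hw : RegularlyVarying 0 w)
    (hw_meas : AEMeasurable w logMeasure) (hfin : tailNorm r w 1 ≠ ∞) (hp : p ≠ 0) (hp' : p ≠ ∞)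
    (hpq : p ≤ q) (hpr : p ≤ r) :
    OfClass N₀ N₁ p (fun t => A t * (tailNorm r w t).toReal) (initialNorm N₀ N₁ r q w A) :=
  ⟨exists_mul_Kf_le_initialNorm hA hw hw_meas hfin (hp.bot_lt.trans_le hpq).ne' N₀ N₁,
    initialNorm_dominated hA hw hw_meas hfin hp hp' hpq hpr⟩

end LSpace

section Reiteration

namespace RegularlyVarying

variable {α β l : ℝ} {U V W : ℝ → ℝ}

theorem exists_isDiscretizing (hW : RegularlyVarying α W) (hα : 0 < α) :
    ∃ l Λ, 2 ≤ l ∧ IsDiscretizing Λ fun k : ℤ => W (l ^ k) := by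
  obtain ⟨C, hC⟩ := hW.exists_le_mul_rpow_neg (half_lt_self hα)
  have hlim : Tendsto (fun l : ℝ => C * l ^ (-(α / 2))) atTop (nhds (C * 0)) :=
    (tendsto_rpow_neg_atTop (half_pos hα)).const_mul _
  rw [mul_zero] at hlim
  obtain ⟨l, hl_half, hl⟩ :=
    ((hlim.eventually_le_const one_half_pos).and (eventually_ge_atTop 2)).exists
  obtain ⟨Λ, hΛ⟩ := hW.exists_le_mul_of_le_mul l
  have ht := IsDiscretizing.zpow hl
  refine ⟨l, Λ, hl, fun k => hW.pos _ (ht.pos k), fun k => ?_, fun k =>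
    (hΛ (ht.pos k) (ht.le_succ k) (ht.le_mul k)).1⟩
  have hdiv : l ^ (k + 1) / l ^ k = l := by
    rw [zpow_add_one₀ (by positivity), mul_div_cancel_left₀ _ (ht.pos k).ne']
  have h := hC (ht.pos k) (ht.le_succ k)
  rw [hdiv] at h
  linarith [h.trans (mul_le_mul_of_nonneg_right hl_half (hW.pos _ (ht.pos (k + 1))).le)]

theorem exists_zpow_le_pow_natAbs_mul (hW : RegularlyVarying α W) (hα : 0 < α) (hl : 1 < l) :
    ∃ γ : ℝ≥0, γ < 1 ∧ ∃ C : ℝ≥0, ∀ j k : ℤ, j ≤ k →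
      ENNReal.ofReal (W (l ^ j)) ≤ C * γ ^ (j - k).natAbs * ENNReal.ofReal (W (l ^ k)) := by
  obtain ⟨C, hC⟩ := hW.exists_le_mul_rpow_neg (half_lt_self hα)
  have hl_pos : 0 < l := one_pos.trans hl
  have hγ : l ^ (-(α / 2)) < 1 := Real.rpow_lt_one_of_one_lt_of_neg hl (by linarith)
  refine ⟨(l ^ (-(α / 2))).toNNReal, by simpa using hγ, C, fun j k hjk => ?_⟩
  have hdiv : l ^ k / l ^ j = l ^ (j - k).natAbs := by
    rw [← zpow_sub₀ hl_pos.ne', ← zpow_natCast, Int.ofNat_natAbs_of_nonpos (by lia), neg_sub]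
  have h := hC (zpow_pos hl_pos j) (zpow_le_zpow_right₀ hl.le hjk)
  rw [hdiv, ← Real.rpow_natCast_mul hl_pos.le, mul_comm (_ : ℝ) (-_),
    Real.rpow_mul_natCast hl_pos.le] at h
  rw [← ENNReal.coe_pow, ← ENNReal.coe_mul]
  refine ofReal_le_coe_mul_ofReal ?_
  rwa [NNReal.coe_mul, NNReal.coe_pow, Real.coe_toNNReal _ (by positivity)]

theorem exists_zpow_le_pow_natAbs_mul_of_neg (hW : RegularlyVarying α W) (hα : α < 0)
    (hl : 1 < l) : ∃ γ : ℝ≥0, γ < 1 ∧ ∃ C : ℝ≥0, ∀ j k : ℤ, j ≤ k →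
      ENNReal.ofReal (W (l ^ k)) ≤ C * γ ^ (j - k).natAbs * ENNReal.ofReal (W (l ^ j)) := by
  have hrefl : RegularlyVarying (-α) fun t => W t⁻¹ := by simpa using hW.comp id.inv
  obtain ⟨γ, hγ, C, hC⟩ := hrefl.exists_zpow_le_pow_natAbs_mul (neg_pos.2 hα) hl
  refine ⟨γ, hγ, C, fun j k hjk => ?_⟩
  simpa only [← zpow_neg, neg_neg, sub_neg_eq_add, neg_add_eq_sub] using
    hC (-k) (-j) (neg_le_neg hjk)

theorem exists_le_pow_natAbs_mul_or (hU : RegularlyVarying α U) (hV : RegularlyVarying β V)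
    (hαβ : 0 < α * β) (hl : 1 < l) : ∃ γ : ℝ≥0, γ < 1 ∧ ∃ C : ℝ≥0, ∀ j k : ℤ,
      ENNReal.ofReal (U (l ^ k)) ≤ C * γ ^ (j - k).natAbs * ENNReal.ofReal (U (l ^ j)) ∨
      ENNReal.ofReal (V (l ^ j)) ≤ C * γ ^ (j - k).natAbs * ENNReal.ofReal (V (l ^ k)) := by
  have hweaken {C C' γ γ' : ℝ≥0} {x y : ℝ≥0∞} {n : ℕ} (hC : C ≤ C') (hγ : γ ≤ γ')
      (h : x ≤ C * γ ^ n * y) : x ≤ C' * γ' ^ n * y := by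
    refine h.trans ?_
    gcongr
  rcases pos_and_pos_or_neg_and_neg_of_mul_pos hαβ with ⟨hα, hβ⟩ | ⟨hα, hβ⟩
  · obtain ⟨γ, hγ, C, hC⟩ := hU.exists_zpow_le_pow_natAbs_mul hα hl
    obtain ⟨γ', hγ', C', hC'⟩ := hV.exists_zpow_le_pow_natAbs_mul hβ hl
    refine ⟨max γ γ', max_lt hγ hγ', max C C', fun j k => ?_⟩
    rcases le_total j k with hjk | hkj
    · exact .inr (hweaken (le_max_right _ _) (le_max_right _ _) (hC' j k hjk))
    · have h := hC k j hkj
      rw [← Int.natAbs_neg, neg_sub] at h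
      exact .inl (hweaken (le_max_left _ _) (le_max_left _ _) h)
  · obtain ⟨γ, hγ, C, hC⟩ := hU.exists_zpow_le_pow_natAbs_mul_of_neg hα hl
    obtain ⟨γ', hγ', C', hC'⟩ := hV.exists_zpow_le_pow_natAbs_mul_of_neg hβ hl
    refine ⟨max γ γ', max_lt hγ hγ', max C C', fun j k => ?_⟩
    rcases le_total j k with hjk | hkj
    · exact .inl (hweaken (le_max_left _ _) (le_max_left _ _) (hC j k hjk))
    · have h := hC' k j hkj
      rw [← Int.natAbs_neg, neg_sub] at h
      exact .inr (hweaken (le_max_right _ _) (le_max_right _ _) h)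

end RegularlyVarying

theorem mul_mul_min_le_mul_add {a a' b b' y y' D : ℝ≥0∞} (h : a' ≤ D * a ∨ b ≤ D * b') :
    a' * (b * min y y') ≤ D * (a * (b * y) + a' * (b' * y')) := by
  rcases h with h | h
  · calc a' * (b * min y y') ≤ D * a * (b * y) := by gcongr; exact min_le_left _ _
      _ = D * (a * (b * y)) := mul_assoc _ _ _
      _ ≤ _ := by gcongr; exact le_self_add
  · calc a' * (b * min y y') ≤ a' * (D * b' * y') := by gcongr; exact min_le_right _ _
      _ = D * (a' * (b' * y')) := by ring
      _ ≤ _ := by gcongr; exact le_add_self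

variable {G : Type*} [AddCommGroup G] {N₀ N₁ L₀ L₁ L : G → ℝ≥0∞} {α β l θ θ₀ θ₁ : ℝ}
  {p r : ℝ≥0∞} {U V v v₀ v₁ w : ℝ → ℝ}

theorem OfClass.exists_mul_le_eLpNorm_count
    (hL : OfClass N₀ N₁ p v L) (hv : RegularlyVarying α v) (hp : p ≠ 0) (hl : 2 ≤ l) :
    ∃ C : ℝ≥0, ∀ (h : G) (c : ℝ≥0∞) (D : ℝ≥0) (z : ℤ → ℝ≥0∞),
      (∀ j : ℤ, c * (ENNReal.ofReal (v (l ^ j)) * Kf N₀ N₁ (l ^ j) h) ≤ D * z j) →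
        c * L h ≤ C * D * eLpNorm z p Measure.count := by
  obtain ⟨C, hC⟩ := hL.dominated_interpNorm.trans
    (interpNorm_dominated_eLpNorm_count hv (IsDiscretizing.zpow hl) hp)
  refine ⟨C, fun h c D z hz => ?_⟩
  calc c * L h ≤ C * (c * eLpNorm (fun j : ℤ => ENNReal.ofReal (v (l ^ j)) * Kf N₀ N₁ (l ^ j) h) p
          Measure.count) := (mul_le_mul_right (hC h) c).trans_eq (mul_left_comm _ _ _)
    _ ≤ C * (D * eLpNorm z p Measure.count) := by
        rw [← eLpNorm_ennreal_const_mul Measurable.of_discrete.aemeasurable]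
        exact mul_le_mul_right (eLpNorm_le_coe_mul (ae_of_all _ hz) p) _
    _ = _ := (mul_assoc _ _ _).symm

theorem OfClass.exists_mul_le_hardyMean (hL : OfClass N₀ N₁ p v L) (hv : RegularlyVarying θ v)
    (hU : RegularlyVarying α U) (hV : RegularlyVarying β V) (hαβ : 0 < α * β) (hp : p ≠ 0)
    (hl : 2 ≤ l) :
    ∃ γ : ℝ≥0, γ < 1 ∧ ∃ C : ℝ≥0, ∀ (k : ℤ) (h : G) (D : ℝ≥0) (y : ℤ → ℝ≥0∞),
      (∀ j : ℤ, ENNReal.ofReal (v (l ^ j)) * Kf N₀ N₁ (l ^ j) h ≤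
        D * (ENNReal.ofReal (V (l ^ j)) * min (y j) (y k))) →
      ENNReal.ofReal (U (l ^ k)) * L h ≤ C * D *
        hardyMean γ p (fun j => ENNReal.ofReal (U (l ^ j)) * (ENNReal.ofReal (V (l ^ j)) * y j))
          k := by
  obtain ⟨γ, hγ, C, hC⟩ := hU.exists_le_pow_natAbs_mul_or hV hαβ (one_lt_two.trans_le hl)
  obtain ⟨C', hC'⟩ := hL.exists_mul_le_eLpNorm_count hv hp hl
  refine ⟨γ, hγ, C' * C, fun k h D y hy => ?_⟩
  rw [ENNReal.coe_mul, mul_assoc (C' : ℝ≥0∞), mul_comm (C : ℝ≥0∞), ← ENNReal.coe_mul, hardyMean]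
  refine hC' h _ (D * C) _ fun j => ?_
  calc ENNReal.ofReal (U (l ^ k)) * (ENNReal.ofReal (v (l ^ j)) * Kf N₀ N₁ (l ^ j) h)
      ≤ ENNReal.ofReal (U (l ^ k)) * (D * (ENNReal.ofReal (V (l ^ j)) * min (y j) (y k))) :=
        mul_le_mul_right (hy j) _
    _ = D * (ENNReal.ofReal (U (l ^ k)) * (ENNReal.ofReal (V (l ^ j)) * min (y j) (y k))) :=
        mul_left_comm _ _ _
    _ ≤ D * (C * γ ^ (j - k).natAbs * _) := mul_le_mul_right (mul_mul_min_le_mul_add (hC j k)) _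
    _ = _ := by rw [ENNReal.coe_mul]; ring

/-- The weight `W` for which reiterating with weight `w` between spaces of class `v₀` and `v₁`
gives the interpolation space with weight `W`. -/
def reiterationWeight (w v₀ v₁ : ℝ → ℝ) (t : ℝ) : ℝ := w (v₀ t / v₁ t) * v₀ t

theorem exists_mul_Kf_le_Kf (h₀ : IsQuasiNorm N₀) (h₁ : IsQuasiNorm N₁)
    (hL₀ : OfClass N₀ N₁ p v₀ L₀) (hL₁ : OfClass N₀ N₁ p v₁ L₁) (hv₀ : ∀ t, 0 < t → 0 < v₀ t)
    (hv₁ : ∀ t, 0 < t → 0 < v₁ t) :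
    ∃ C : ℝ≥0, ∀ t, 0 < t → ∀ f,
      ENNReal.ofReal (v₀ t) * Kf N₀ N₁ t f ≤ C * Kf L₀ L₁ (v₀ t / v₁ t) f := by
  obtain ⟨C, hC⟩ := exists_Kf_add_le h₀ h₁
  obtain ⟨C₀, hC₀⟩ := hL₀.exists_mul_Kf_le
  obtain ⟨C₁, hC₁⟩ := hL₁.exists_mul_Kf_le
  have hne : ((C * (C₀ + C₁) + 1 : ℝ≥0) : ℝ≥0∞) ≠ 0 := by simp
  refine ⟨C * (C₀ + C₁) + 1, fun t ht f => ?_⟩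
  rw [Kf.eq_def L₀, ENNReal.mul_iInf_of_ne hne coe_ne_top]
  refine le_iInf fun g => ?_
  have hsplit : ENNReal.ofReal (v₀ t) =
      ENNReal.ofReal (v₀ t / v₁ t) * ENNReal.ofReal (v₁ t) := by
    rw [← ENNReal.ofReal_mul (div_pos (hv₀ t ht) (hv₁ t ht)).le,
      div_mul_cancel₀ _ (hv₁ t ht).ne']
  have hg : ENNReal.ofReal (v₀ t) * Kf N₀ N₁ t g ≤ C₀ * L₀ g := hC₀ t ht g
  have hfg : ENNReal.ofReal (v₀ t) * Kf N₀ N₁ t (f - g) ≤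
      C₁ * (ENNReal.ofReal (v₀ t / v₁ t) * L₁ (f - g)) := by
    rw [hsplit, mul_assoc, mul_left_comm (C₁ : ℝ≥0∞)]
    exact mul_le_mul_right (hC₁ t ht (f - g)) _
  calc ENNReal.ofReal (v₀ t) * Kf N₀ N₁ t f
      ≤ ENNReal.ofReal (v₀ t) * (C * (Kf N₀ N₁ t g + Kf N₀ N₁ t (f - g))) := by
        gcongr
        simpa using hC t g (f - g)
    _ = C * (ENNReal.ofReal (v₀ t) * Kf N₀ N₁ t g +
          ENNReal.ofReal (v₀ t) * Kf N₀ N₁ t (f - g)) := by rw [← mul_add, mul_left_comm]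
    _ ≤ C * (C₀ * L₀ g + C₁ * (ENNReal.ofReal (v₀ t / v₁ t) * L₁ (f - g))) := by gcongr
    _ ≤ C * ((C₀ + C₁) * L₀ g + (C₀ + C₁) * (ENNReal.ofReal (v₀ t / v₁ t) * L₁ (f - g))) := by
        gcongr
        exacts [le_self_add, le_add_self]
    _ ≤ (C * (C₀ + C₁) + 1 : ℝ≥0) * (L₀ g + ENNReal.ofReal (v₀ t / v₁ t) * L₁ (f - g)) := by
        push_cast
        rw [← mul_add, ← mul_assoc]
        gcongr
        exact le_self_add

theorem exists_mul_left_le_hardyMean (hL₀ : OfClass N₀ N₁ p v₀ L₀)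
    (hv₀ : RegularlyVarying (-θ₀) v₀) (hv₁ : RegularlyVarying (-θ₁) v₁)
    (hw : RegularlyVarying (-θ) w) (hθ : 0 < θ) (hθ₀ : 0 < θ₀) (hθ₀₁ : θ₀ < θ₁) (hp : p ≠ 0)
    (hl : 2 ≤ l) :
    ∃ γ : ℝ≥0, γ < 1 ∧ ∃ C : ℝ≥0, ∀ (k : ℤ) (f g : G) (D : ℝ≥0),
      (∀ s, 0 < s → Kf N₀ N₁ s g ≤ D * min (Kf N₀ N₁ s f) (Kf N₀ N₁ (l ^ k) f)) →
      ENNReal.ofReal (w (v₀ (l ^ k) / v₁ (l ^ k))) * L₀ g ≤ C * D * hardyMean γ p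
        (fun j => ENNReal.ofReal (reiterationWeight w v₀ v₁ (l ^ j)) * Kf N₀ N₁ (l ^ j) f) k := by
  have hl_pos : 0 < l := two_pos.trans_le hl
  have hW := hw.comp (hv₀.div hv₁)
  have hindex : 0 < -θ * (-θ₀ - -θ₁) * -θ₀ := by
    nlinarith [mul_pos (mul_pos hθ (sub_pos.2 hθ₀₁)) hθ₀]
  obtain ⟨γ, hγ, C, hC⟩ := hL₀.exists_mul_le_hardyMean hv₀ hW hv₀ hindex hp hl
  refine ⟨γ, hγ, C, fun k f g D hg => ?_⟩
  have hWv (j : ℤ) := ENNReal.ofReal_mul (q := v₀ (l ^ j)) (hW.pos _ (zpow_pos hl_pos j)).le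
  simp only [reiterationWeight, hWv, mul_assoc (ENNReal.ofReal (w _))]
  refine hC k g D (fun j => Kf N₀ N₁ (l ^ j) f) fun j => ?_
  rw [mul_left_comm]
  gcongr
  exact hg _ (zpow_pos hl_pos j)

theorem exists_mul_right_le_hardyMean (hL₁ : OfClass N₀ N₁ p v₁ L₁)
    (hv₀ : RegularlyVarying (-θ₀) v₀) (hv₁ : RegularlyVarying (-θ₁) v₁)
    (hw : RegularlyVarying (-θ) w) (hθ : θ < 1) (hθ₀₁ : θ₀ < θ₁) (hθ₁ : θ₁ < 1) (hp : p ≠ 0)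
    (hl : 2 ≤ l) :
    ∃ γ : ℝ≥0, γ < 1 ∧ ∃ C : ℝ≥0, ∀ (k : ℤ) (f h : G) (D : ℝ≥0),
      (∀ s, 0 < s → Kf N₀ N₁ s h ≤
        D * min (Kf N₀ N₁ s f) (ENNReal.ofReal (s / l ^ k) * Kf N₀ N₁ (l ^ k) f)) →
      ENNReal.ofReal (v₀ (l ^ k) / v₁ (l ^ k) * w (v₀ (l ^ k) / v₁ (l ^ k))) * L₁ h ≤
        C * D * hardyMean γ p
          (fun j => ENNReal.ofReal (reiterationWeight w v₀ v₁ (l ^ j)) * Kf N₀ N₁ (l ^ j) f) k := by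
  have hl_pos : 0 < l := two_pos.trans_le hl
  have hρ := hv₀.div hv₁
  have hU := hρ.mul (hw.comp hρ)
  have hV := hv₁.mul .id
  have hindex : 0 < (-θ₀ - -θ₁ + -θ * (-θ₀ - -θ₁)) * (-θ₁ + 1) := by
    nlinarith [mul_pos (mul_pos (sub_pos.2 hθ) (sub_pos.2 hθ₀₁)) (sub_pos.2 hθ₁)]
  obtain ⟨γ, hγ, C, hC⟩ := hL₁.exists_mul_le_hardyMean hv₁ hU hV hindex hp hl
  refine ⟨γ, hγ, C, fun k f h D hh => ?_⟩
  have hpos (j : ℤ) : 0 < l ^ j := zpow_pos hl_pos j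
  have hterm (j : ℤ) : ENNReal.ofReal (reiterationWeight w v₀ v₁ (l ^ j)) * Kf N₀ N₁ (l ^ j) f =
      ENNReal.ofReal (v₀ (l ^ j) / v₁ (l ^ j) * w (v₀ (l ^ j) / v₁ (l ^ j))) *
        (ENNReal.ofReal (v₁ (l ^ j) * l ^ j) *
          (ENNReal.ofReal (l ^ j)⁻¹ * Kf N₀ N₁ (l ^ j) f)) := by
    have hv₁_ne := (hv₁.pos _ (hpos j)).ne'
    rw [← mul_assoc, ← mul_assoc, ← ENNReal.ofReal_mul (hU.pos _ (hpos j)).le, ← ENNReal.ofReal_mul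
      (mul_pos (hU.pos _ (hpos j)) (hV.pos _ (hpos j))).le, reiterationWeight]
    congr 2
    field_simp [(hpos j).ne']
  simp only [hterm]
  refine hC k h D (fun j => ENNReal.ofReal (l ^ j)⁻¹ * Kf N₀ N₁ (l ^ j) f) fun j => ?_
  have hcancel : ENNReal.ofReal (l ^ j) * ENNReal.ofReal (l ^ j)⁻¹ = 1 := by
    rw [← ENNReal.ofReal_mul (hpos j).le, mul_inv_cancel₀ (hpos j).ne', ENNReal.ofReal_one]
  rw [ENNReal.ofReal_mul (hv₁.pos _ (hpos j)).le, mul_assoc (ENNReal.ofReal (v₁ _)), mul_min,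
    ← mul_assoc (ENNReal.ofReal (l ^ j)), hcancel, one_mul, ← mul_assoc (ENNReal.ofReal (l ^ j)),
    ← ENNReal.ofReal_mul (hpos j).le, ← div_eq_mul_inv, mul_left_comm (D : ℝ≥0∞)]
  gcongr
  exact hh _ (hpos j)

theorem exists_mul_Kf_le_hardyMean (h₀ : IsQuasiNorm N₀) (h₁ : IsQuasiNorm N₁)
    (hL₀ : OfClass N₀ N₁ p v₀ L₀) (hL₁ : OfClass N₀ N₁ p v₁ L₁)
    (hv₀ : RegularlyVarying (-θ₀) v₀) (hv₁ : RegularlyVarying (-θ₁) v₁)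
    (hw : RegularlyVarying (-θ) w) (hθ : 0 < θ) (hθ' : θ < 1) (hθ₀ : 0 < θ₀) (hθ₀₁ : θ₀ < θ₁)
    (hθ₁ : θ₁ < 1) (hp : p ≠ 0) (hl : 2 ≤ l) :
    ∃ γ : ℝ≥0, γ < 1 ∧ ∃ C : ℝ≥0, ∀ (f : G) (k : ℤ),
      ENNReal.ofReal (w (v₀ (l ^ k) / v₁ (l ^ k))) * Kf L₀ L₁ (v₀ (l ^ k) / v₁ (l ^ k)) f ≤
        C * hardyMean γ p
          (fun j => ENNReal.ofReal (reiterationWeight w v₀ v₁ (l ^ j)) * Kf N₀ N₁ (l ^ j) f) k := by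
  obtain ⟨D, hD⟩ := exists_Kf_decomposition h₀ h₁
  obtain ⟨γ₀, hγ₀, C₀, hC₀⟩ :=
    exists_mul_left_le_hardyMean hL₀ hv₀ hv₁ hw hθ hθ₀ hθ₀₁ hp hl
  obtain ⟨γ₁, hγ₁, C₁, hC₁⟩ :=
    exists_mul_right_le_hardyMean hL₁ hv₀ hv₁ hw hθ' hθ₀₁ hθ₁ hp hl
  refine ⟨max γ₀ γ₁, max_lt hγ₀ hγ₁, C₀ * D + C₁ * D, fun f k => ?_⟩
  have hk : 0 < l ^ k := zpow_pos (two_pos.trans_le hl) k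
  set u := v₀ (l ^ k) / v₁ (l ^ k)
  have hu_pos : 0 < u := div_pos (hv₀.pos _ hk) (hv₁.pos _ hk)
  obtain ⟨g, hg⟩ := hD f (l ^ k) hk
  calc ENNReal.ofReal (w u) * Kf L₀ L₁ u f
      ≤ ENNReal.ofReal (w u) * (L₀ g + ENNReal.ofReal u * L₁ (f - g)) := by
        gcongr
        exact iInf_le _ g
    _ = ENNReal.ofReal (w u) * L₀ g + ENNReal.ofReal (u * w u) * L₁ (f - g) := by
        rw [ENNReal.ofReal_mul hu_pos.le]
        ring
    _ ≤ _ := add_le_add (hC₀ k f g D fun s hs => (hg s hs).1)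
        (hC₁ k f (f - g) D fun s hs => (hg s hs).2)
    _ ≤ _ := by
        push_cast
        rw [add_mul]
        gcongr
        exacts [hardyMean_mono (le_max_left _ _) _ _ _, hardyMean_mono (le_max_right _ _) _ _ _]

theorem equivNorms_interpNorm_reiteration (h₀ : IsQuasiNorm N₀) (h₁ : IsQuasiNorm N₁)
    (hL₀ : OfClass N₀ N₁ p v₀ L₀) (hL₁ : OfClass N₀ N₁ p v₁ L₁)
    (hv₀ : RegularlyVarying (-θ₀) v₀) (hv₁ : RegularlyVarying (-θ₁) v₁)
    (hw : RegularlyVarying (-θ) w) (hθ : 0 < θ) (hθ' : θ < 1) (hθ₀ : 0 < θ₀) (hθ₀₁ : θ₀ < θ₁)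
    (hθ₁ : θ₁ < 1) (hp : p ≠ 0) (hp' : p ≠ ∞) (hpr : p ≤ r) :
    EquivNorms (interpNorm L₀ L₁ r w) (interpNorm N₀ N₁ r (reiterationWeight w v₀ v₁)) := by
  have hr : r ≠ 0 := (hp.bot_lt.trans_le hpr).ne'
  have hρ := hv₀.div hv₁
  have hW : RegularlyVarying _ (reiterationWeight w v₀ v₁) := (hw.comp hρ).mul hv₀
  obtain ⟨l, Λ, hl, hu⟩ := hρ.exists_isDiscretizing (by linarith)
  have ht := IsDiscretizing.zpow hl
  obtain ⟨γ, hγ, C, hC⟩ := exists_mul_Kf_le_hardyMean h₀ h₁ hL₀ hL₁ hv₀ hv₁ hw hθ hθ' hθ₀ hθ₀₁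
    hθ₁ hp hl
  obtain ⟨D, hD⟩ := hardyMean_dominated hγ hp hp' hpr
  obtain ⟨C', hC'⟩ := exists_mul_Kf_le_Kf h₀ h₁ hL₀ hL₁ hv₀.pos hv₁.pos
  refine .of_dominated
    ((interpNorm_dominated_eLpNorm_count hw hu hr).trans (Dominated.trans ⟨C * D, fun f => ?_⟩
      (eLpNorm_count_dominated_interpNorm hW ht hr)))
    ((interpNorm_dominated_eLpNorm_count hW ht hr).trans (Dominated.trans ⟨C', fun f => ?_⟩
      (eLpNorm_count_dominated_interpNorm hw hu hr)))
  · rw [ENNReal.coe_mul, mul_assoc]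
    exact (eLpNorm_le_coe_mul (ae_of_all _ (hC f)) r).trans (mul_le_mul_right (hD _) _)
  · refine eLpNorm_le_coe_mul (ae_of_all _ fun k => ?_) r
    rw [reiterationWeight, ENNReal.ofReal_mul (hw.pos _ (hu.pos k)).le, mul_assoc,
      mul_left_comm (C' : ℝ≥0∞)]
    exact mul_le_mul_right (hC' _ (ht.pos k) f) _

end Reiteration

section LSpaceReiteration

variable {G : Type*} [AddCommGroup G] {N₀ N₁ L : G → ℝ≥0∞} {p q r : ℝ≥0∞} {a b c u v : ℝ → ℝ}

theorem OfClass.congr (hL : OfClass N₀ N₁ p u L) (h : ∀ t, 0 < t → v t = u t) :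
    OfClass N₀ N₁ p v L where
  exists_mul_Kf_le := hL.exists_mul_Kf_le.imp fun _ hC t ht => by simpa only [h t ht] using hC t ht
  dominated_interpNorm := by simpa only [interpNorm_congr h] using hL.dominated_interpNorm

theorem regularlyVarying_mul_toReal_LqNorm (ha : SlowlyVarying a) (hb : SlowlyVarying b)
    (hr : r ≠ 0) (hfin : LqNorm r (Ioi 1) (svWgt r fun s => b s / a s) ≠ ∞)
    (hc : ∀ t, c t = a t * (LqNorm r (Ioi t) (svWgt r fun s => b s / a s)).toReal) :
    RegularlyVarying 0 c := by
  have hba : RegularlyVarying 0 fun s => b s / a s := by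
    simpa using hb.regularlyVarying.div ha.regularlyVarying
  rw [LqNorm_svWgt_Ioi_eq_tailNorm hr _ zero_le_one] at hfin
  have h := ha.regularlyVarying.mul (hba.toReal_tailNorm hr hfin)
  rw [add_zero] at h
  exact h.congr fun t ht => by rw [hc, LqNorm_svWgt_Ioi_eq_tailNorm hr _ ht.le]

theorem ofClass_normL (ha : SlowlyVarying a) (hb : SlowlyVarying b)
    (hfin : LqNorm r (Ioi 1) (svWgt r fun s => b s / a s) ≠ ∞)
    (hc : ∀ t, c t = a t * (LqNorm r (Ioi t) (svWgt r fun s => b s / a s)).toReal)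
    (hp : p ≠ 0) (hp' : p ≠ ∞) (hpq : p ≤ q) (hpr : p ≤ r) (σ : ℝ) :
    OfClass N₀ N₁ p (fun t => t ^ (-σ) * c t) (normL N₀ N₁ σ r q b a) := by
  have hr : r ≠ 0 := (hp.bot_lt.trans_le hpr).ne'
  have hba : RegularlyVarying 0 fun s => b s / a s := by
    simpa using hb.regularlyVarying.div ha.regularlyVarying
  have hba_meas : AEMeasurable (fun s => b s / a s) logMeasure :=
    (hb.1.div ha.1).mono_ac (withDensity_absolutelyContinuous _ _)
  rw [LqNorm_svWgt_Ioi_eq_tailNorm hr _ zero_le_one] at hfin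
  rw [normL_eq_initialNorm hr (hp.bot_lt.trans_le hpq).ne']
  refine (ofClass_initialNorm ((RegularlyVarying.rpow_id (-σ)).mul ha.regularlyVarying) hba hba_meas
    hfin hp hp' hpq hpr).congr fun t ht => ?_
  rw [hc, LqNorm_svWgt_Ioi_eq_tailNorm hr _ ht.le, mul_assoc]

theorem rpow_neg_mul_div_rpow_neg_mul {x : ℝ} (hx : 0 < x) (σ τ y z : ℝ) :
    x ^ (-σ) * y / (x ^ (-τ) * z) = x ^ (τ - σ) * (y / z) := by
  rw [mul_div_mul_comm, ← Real.rpow_sub hx, neg_sub_neg]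

theorem rpow_neg_mul_rpow_mul_rpow {x y z : ℝ} (hx : 0 < x) (hy : 0 < y) (hz : 0 < z)
    (σ τ θ : ℝ) :
    x ^ (-((1 - θ) * σ + θ * τ)) * (y ^ (1 - θ) * z ^ θ) =
      (x ^ (τ - σ) * (y / z)) ^ (-θ) * (x ^ (-σ) * y) := by
  have hx_exp : x ^ (-((1 - θ) * σ + θ * τ)) = x ^ ((τ - σ) * -θ) * x ^ (-σ) := by
    rw [← Real.rpow_add hx]
    ring_nf
  have hy_exp : y ^ (1 - θ) = y ^ (-θ) * y := by
    rw [sub_eq_neg_add, Real.rpow_add hy, Real.rpow_one]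
  rw [Real.mul_rpow (by positivity) (by positivity), Real.div_rpow hy.le hz.le,
    ← Real.rpow_mul hx.le, Real.rpow_neg hz.le, div_inv_eq_mul, hx_exp, hy_exp]
  ring

theorem theorem25_general (h₀ : IsQuasiNorm N₀) (h₁ : IsQuasiNorm N₁) {θ₀ θ₁ θ : ℝ} (hθ₀ : 0 < θ₀)
    (hθ₀₁ : θ₀ < θ₁) (hθ₁ : θ₁ < 1) (hθ : 0 < θ) (hθ' : θ < 1) {r r₀ r₁ q₀ q₁ : ℝ≥0∞} (hr : 0 < r)
    (hr₀ : 0 < r₀) (hr₁ : 0 < r₁) (hq₀ : 0 < q₀) (hq₁ : 0 < q₁) {a a₀ a₁ b₀ b₁ : ℝ → ℝ}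
    (ha : SlowlyVarying a) (ha₀ : SlowlyVarying a₀) (ha₁ : SlowlyVarying a₁)
    (hb₀ : SlowlyVarying b₀) (hb₁ : SlowlyVarying b₁)
    (hfin₀ : LqNorm r₀ (Ioi 1) (svWgt r₀ fun s => b₀ s / a₀ s) ≠ ∞)
    (hfin₁ : LqNorm r₁ (Ioi 1) (svWgt r₁ fun s => b₁ s / a₁ s) ≠ ∞) {c₀ c₁ ρ : ℝ → ℝ}
    (hc₀ : ∀ t, c₀ t = a₀ t * (LqNorm r₀ (Ioi t) (svWgt r₀ fun s => b₀ s / a₀ s)).toReal)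
    (hc₁ : ∀ t, c₁ t = a₁ t * (LqNorm r₁ (Ioi t) (svWgt r₁ fun s => b₁ s / a₁ s)).toReal)
    (hρ : ∀ t, ρ t = t ^ (θ₁ - θ₀) * (c₀ t / c₁ t)) :
    EquivNorms
      (normK (normL N₀ N₁ θ₀ r₀ q₀ b₀ a₀) (normL N₀ N₁ θ₁ r₁ q₁ b₁ a₁) θ r a)
      (normK N₀ N₁ ((1 - θ) * θ₀ + θ * θ₁) r fun t => c₀ t ^ (1 - θ) * c₁ t ^ θ * a (ρ t)) := by
  have hmin : 0 < min r (min (min r₀ r₁) (min q₀ q₁)) := by simp [*]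
  obtain ⟨p, hp, hp_lt⟩ := exists_between hmin
  simp only [lt_min_iff] at hp_lt
  obtain ⟨hpr, ⟨hpr₀, hpr₁⟩, hpq₀, hpq₁⟩ := hp_lt
  have hrv₀ : RegularlyVarying 0 c₀ :=
    regularlyVarying_mul_toReal_LqNorm ha₀ hb₀ hr₀.ne' hfin₀ hc₀
  have hrv₁ : RegularlyVarying 0 c₁ :=
    regularlyVarying_mul_toReal_LqNorm ha₁ hb₁ hr₁.ne' hfin₁ hc₁
  have hindex (σ : ℝ) {c : ℝ → ℝ} (hc : RegularlyVarying 0 c) :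
      RegularlyVarying (-σ) fun t => t ^ (-σ) * c t := by
    simpa using (RegularlyVarying.rpow_id (-σ)).mul hc
  have hweight (t : ℝ) (ht : 0 < t) : t ^ (-((1 - θ) * θ₀ + θ * θ₁)) *
      (c₀ t ^ (1 - θ) * c₁ t ^ θ * a (ρ t)) = reiterationWeight (fun u => u ^ (-θ) * a u)
        (fun t => t ^ (-θ₀) * c₀ t) (fun t => t ^ (-θ₁) * c₁ t) t := by
    rw [reiterationWeight, rpow_neg_mul_div_rpow_neg_mul ht, ← mul_assoc,
      rpow_neg_mul_rpow_mul_rpow ht (hrv₀.pos t ht) (hrv₁.pos t ht), ← hρ, mul_right_comm]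
  rw [normK_eq_interpNorm hr.ne', normK_eq_interpNorm hr.ne', interpNorm_congr hweight]
  exact equivNorms_interpNorm_reiteration h₀ h₁
    (ofClass_normL ha₀ hb₀ hfin₀ hc₀ hp.ne' hpr.ne_top hpq₀.le hpr₀.le θ₀)
    (ofClass_normL ha₁ hb₁ hfin₁ hc₁ hp.ne' hpr.ne_top hpq₁.le hpr₁.le θ₁)
    (hindex θ₀ hrv₀) (hindex θ₁ hrv₁) (hindex θ ha.regularlyVarying) hθ hθ' hθ₀ hθ₀₁ hθ₁ hp.ne'
    hpr.ne_top hpr.le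

end LSpaceReiteration

theorem theorem25
    (A₀ A₁ : QuasiBanach E)
    (hne : ∃ x : E, x ≠ 0 ∧ A₀.N x ≠ ∞ ∧ A₁.N x ≠ ∞)
    (θ₀ θ₁ θ : ℝ) (hθ₀ : 0 < θ₀) (hθ₀₁ : θ₀ < θ₁) (hθ₁ : θ₁ < 1) (hθ : 0 < θ) (hθ' : θ < 1)
    (r r₀ r₁ q₀ q₁ : ℝ≥0∞) (hr : 0 < r) (hr₀ : 0 < r₀) (hr₁ : 0 < r₁) (hq₀ : 0 < q₀) (hq₁ : 0 < q₁)
    (a a₀ a₁ b₀ b₁ : ℝ → ℝ)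
    (h_sv_a : SlowlyVarying a)
    (h_sv_a₀ : SlowlyVarying a₀)
    (h_sv_a₁ : SlowlyVarying a₁)
    (h_sv_b₀ : SlowlyVarying b₀)
    (h_sv_b₁ : SlowlyVarying b₁)
    (hfin₀ : LqNorm r₀ (Ioi 1) (svWgt r₀ (fun s => b₀ s / a₀ s)) ≠ ∞)
    (hfin₁ : LqNorm r₁ (Ioi 1) (svWgt r₁ (fun s => b₁ s / a₁ s)) ≠ ∞)
    (c₀ c₁ ρ : ℝ → ℝ)
    (hc₀ : ∀ t, c₀ t = a₀ t * (LqNorm r₀ (Ioi t) (svWgt r₀ (fun s => b₀ s / a₀ s))).toReal)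
    (hc₁ : ∀ t, c₁ t = a₁ t * (LqNorm r₁ (Ioi t) (svWgt r₁ (fun s => b₁ s / a₁ s))).toReal)
    (hρ : ∀ t, ρ t = t ^ (θ₁ - θ₀) * (c₀ t / c₁ t)) :
    EquivNorms
      (normK (normL A₀.N A₁.N θ₀ r₀ q₀ b₀ a₀) (normL A₀.N A₁.N θ₁ r₁ q₁ b₁ a₁) θ r a)
      (normK A₀.N A₁.N ((1 - θ) * θ₀ + θ * θ₁) r
        (fun t => c₀ t ^ (1 - θ) * c₁ t ^ θ * a (ρ t))) :=
  theorem25_general A₀.isQuasiNorm A₁.isQuasiNorm hθ₀ hθ₀₁ hθ₁ hθ hθ' hr hr₀ hr₁ hq₀ hq₁ h_sv_a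
    h_sv_a₀ h_sv_a₁ h_sv_b₀ h_sv_b₁ hfin₀ hfin₁ hc₀ hc₁ hρ

end
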